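/- arXiv:1109.5250 — 2 statements merged into one kernel-verified Lean document; each statement's English description precedes it below -/
import Mathlib

section
/- Let φ, φ₁ be Schwartz functions on ℝ^d and let F ∈ L¹(ℝ^{2d}). Define V*_φ F(t) = (2π)^{−d/2} ∬_{ℝ^{2d}} F(x,ξ)·e^{i⟨ξ,t⟩}·φ(t−x) dx dξ, a bounded continuous function of t ∈ ℝ^d. Then for all (x, ξ) ∈ ℝ^{2d}: |V_{φ₁}(V*_φ F)(x,ξ)| ≤ (2π)^{−d/2}·(|F| * |V_{φ₁}φ|)(x,ξ), where * denotes convolution on ℝ^{2d}. -/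
open MeasureTheory Complex Set
open scoped ENNReal RealInnerProductSpace NNReal

noncomputable section

namespace Paper

variable {d : ℕ}

/-- The Fourier transform, normalized by `(2π)^{-d/2}`. -/
def FT (f : EuclideanSpace ℝ (Fin d) → ℂ) (ξ : EuclideanSpace ℝ (Fin d)) : ℂ :=
  ((2 * Real.pi) ^ (-(d : ℝ) / 2) : ℝ) *
    ∫ x, f x * Complex.exp (-(⟪x, ξ⟫ : ℝ) * Complex.I)

/-- The short-time Fourier transform `V_φ f (x, ξ)`. -/
def STFT (φ f : EuclideanSpace ℝ (Fin d) → ℂ) (x ξ : EuclideanSpace ℝ (Fin d)) : ℂ :=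
  ((2 * Real.pi) ^ (-(d : ℝ) / 2) : ℝ) *
    ∫ y, f y * (starRingEnd ℂ) (φ (y - x)) * Complex.exp (-(⟪ξ, y⟫ : ℝ) * Complex.I)

/-- A cone in `ℝ^d ∖ {0}`. -/
def IsCone (Γ : Set (EuclideanSpace ℝ (Fin d))) : Prop :=
  (0 : EuclideanSpace ℝ (Fin d)) ∉ Γ ∧ ∀ ξ ∈ Γ, ∀ t : ℝ, 0 < t → t • ξ ∈ Γ

/-- An `s`-cutoff: smooth, compactly supported, with Fourier transform decaying faster
than every `exp (-N |ξ|^{1/s})`. -/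
def IsSCutoff (s : ℝ) (φ : EuclideanSpace ℝ (Fin d) → ℂ) : Prop :=
  ContDiff ℝ (⊤ : ℕ∞) φ ∧ HasCompactSupport φ ∧
    ∀ N : ℝ, 0 < N → ∃ C : ℝ, 0 < C ∧
      ∀ ξ, ‖FT φ ξ‖ ≤ C * Real.exp (-N * ‖ξ‖ ^ (1 / s))

/-- An `s`-admissible weight: positive, measurable, and moderate with respect to an even
submultiplicative weight of sub-exponential growth of order `1/s`. -/
def IsSAdmissible (s : ℝ) (ω : EuclideanSpace ℝ (Fin d) → ℝ) : Prop :=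
  Measurable ω ∧ (∀ x, 0 < ω x) ∧
    ∃ v : EuclideanSpace ℝ (Fin d) → ℝ, Measurable v ∧ (∀ x, 0 < v x) ∧
      (∀ x, v (-x) = v x) ∧ (∀ x y, v (x + y) ≤ v x * v y) ∧
      ∃ C₀ k₀ C₁ : ℝ, 0 < C₀ ∧ 0 < k₀ ∧ 0 < C₁ ∧
        (∀ ξ, v ξ ≤ C₀ * Real.exp (k₀ * ‖ξ‖ ^ (1 / s))) ∧
        ∀ x y, ω (x + y) ≤ C₁ * v x * ω y

/-- The Fourier–Lebesgue seminorm `( ∫_Γ (|f̂| ω)^q )^{1/q}` (ess-sup when `q = ∞`). -/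
def FLSemi (ω : EuclideanSpace ℝ (Fin d) → ℝ) (q : ℝ≥0∞)
    (f : EuclideanSpace ℝ (Fin d) → ℂ) (Γ : Set (EuclideanSpace ℝ (Fin d))) : ℝ≥0∞ :=
  eLpNorm (fun ξ => ‖FT f ξ‖ * ω ξ) q (volume.restrict Γ)

/-- The Fourier–Lebesgue wave-front set `WF_{FL^q_ω} f`. -/
def WF_FL (s : ℝ) (q : ℝ≥0∞) (ω : EuclideanSpace ℝ (Fin d) → ℝ)
    (f : EuclideanSpace ℝ (Fin d) → ℂ) :
    Set (EuclideanSpace ℝ (Fin d) × EuclideanSpace ℝ (Fin d)) :=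
  {z | z.2 ≠ 0 ∧ ∀ φ : EuclideanSpace ℝ (Fin d) → ℂ, IsSCutoff s φ → φ z.1 ≠ 0 →
    ∀ Γ : Set (EuclideanSpace ℝ (Fin d)), IsOpen Γ → IsCone Γ → z.2 ∈ Γ →
      FLSemi ω q (fun x => φ x * f x) Γ = ∞}

/-- The `s`-wave-front set `WF_s f`. -/
def WFs (s : ℝ) (f : EuclideanSpace ℝ (Fin d) → ℂ) :
    Set (EuclideanSpace ℝ (Fin d) × EuclideanSpace ℝ (Fin d)) :=
  {z | z.2 ≠ 0 ∧ ¬ ∃ φ : EuclideanSpace ℝ (Fin d) → ℂ, IsSCutoff s φ ∧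
    (∃ U : Set (EuclideanSpace ℝ (Fin d)), IsOpen U ∧ z.1 ∈ U ∧ ∀ x ∈ U, φ x = 1) ∧
    ∃ Γ : Set (EuclideanSpace ℝ (Fin d)), IsOpen Γ ∧ IsCone Γ ∧ z.2 ∈ Γ ∧
      ∃ C k : ℝ, 0 < C ∧ 0 < k ∧
        ∀ ξ ∈ Γ, ‖FT (fun x => φ x * f x) ξ‖ ≤ C * Real.exp (-k * ‖ξ‖ ^ (1 / s))}

/-- The mixed modulation-space seminorm
`( ∫_Γ ( ∫ |V_g F(x,ξ)|^p dx )^{q/p} ω(ξ)^q dξ )^{1/q}` with the usual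
ess-sup interpretations for `p = ∞` or `q = ∞`. -/
def ModSemi (g F : EuclideanSpace ℝ (Fin d) → ℂ) (ω : EuclideanSpace ℝ (Fin d) → ℝ)
    (p q : ℝ≥0∞) (Γ : Set (EuclideanSpace ℝ (Fin d))) : ℝ≥0∞ :=
  if q = ∞ then
    essSup (fun ξ => eLpNorm (fun x => STFT g F x ξ) p volume * ENNReal.ofReal (ω ξ))
      (volume.restrict Γ)
  else
    (∫⁻ ξ in Γ, (eLpNorm (fun x => STFT g F x ξ) p volume * ENNReal.ofReal (ω ξ)) ^ q.toReal) ^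
      (1 / q.toReal)

/-- The modulation wave-front set `WF_{M^{p,q}_ω} f`, with window `g`. -/
def WF_M (s : ℝ) (p q : ℝ≥0∞) (ω : EuclideanSpace ℝ (Fin d) → ℝ)
    (g f : EuclideanSpace ℝ (Fin d) → ℂ) :
    Set (EuclideanSpace ℝ (Fin d) × EuclideanSpace ℝ (Fin d)) :=
  {z | z.2 ≠ 0 ∧ ∀ φ : EuclideanSpace ℝ (Fin d) → ℂ, IsSCutoff s φ → φ z.1 ≠ 0 →
    ∀ Γ : Set (EuclideanSpace ℝ (Fin d)), IsOpen Γ → IsCone Γ → z.2 ∈ Γ →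
      ModSemi g (fun x => φ x * f x) ω p q Γ = ∞}

/-- Reinterpret a plain vector as a point of Euclidean space. -/
def toE (x : Fin d → ℝ) : EuclideanSpace ℝ (Fin d) :=
  (EuclideanSpace.equiv (Fin d) ℝ).symm x

/-- The point `A k` of the lattice `A(ℤ^d)`. -/
def latPt (A : Matrix (Fin d) (Fin d) ℝ) (k : Fin d → ℤ) : EuclideanSpace ℝ (Fin d) :=
  toE (A.mulVec fun i => (k i : ℝ))

/-- The point `c (Aᵀ)⁻¹ k` of the dual lattice `c (Aᵀ)⁻¹(ℤ^d)`. -/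
def dualLatPt (A : Matrix (Fin d) (Fin d) ℝ) (c : ℝ) (k : Fin d → ℤ) :
    EuclideanSpace ℝ (Fin d) :=
  toE (c • (A.transpose⁻¹.mulVec fun i => (k i : ℝ)))

/-- The parallelepiped `x₁ + A([0,1]^d)`. -/
def lattPara (A : Matrix (Fin d) (Fin d) ℝ) (x₁ : EuclideanSpace ℝ (Fin d)) :
    Set (EuclideanSpace ℝ (Fin d)) :=
  (fun t : Fin d → ℝ => x₁ + toE (A.mulVec t)) '' (Set.univ.pi fun _ => Set.Icc 0 1)

/-- The adjoint short-time Fourier transform `V*_φ F`. -/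
def VStar (φ : EuclideanSpace ℝ (Fin d) → ℂ)
    (F : EuclideanSpace ℝ (Fin d) × EuclideanSpace ℝ (Fin d) → ℂ)
    (t : EuclideanSpace ℝ (Fin d)) : ℂ :=
  ((2 * Real.pi) ^ (-(d : ℝ) / 2) : ℝ) *
    ∫ z : EuclideanSpace ℝ (Fin d) × EuclideanSpace ℝ (Fin d),
      F z * Complex.exp ((⟪z.2, t⟫ : ℝ) * Complex.I) * φ (t - z.1)

/-!
`V*_φ F` is the superposition, with weight `F`, of the time-frequency shifts of `φ`. By Fubini
`V_{φ₁}` may be applied under this superposition, and shifting `φ` by `z` translates `V_{φ₁} φ` by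
`z` up to a unimodular factor, so the triangle inequality gives the bound. Hölder's inequality makes
the double integral absolutely convergent as soon as the windows lie in dual Lebesgue spaces.
-/

section Translate

variable {G Z R : Type*} [MeasurableSpace G] [AddGroup G] [MeasurableAdd G] [NormedRing R]
  {μ : Measure G} [μ.IsAddRightInvariant] {p q : ℝ≥0∞} [p.HolderConjugate q]

theorem lintegral_enorm_mul_comp_sub_right_le {f g : G → R} (hf : MemLp f p μ) (hg : MemLp g q μ)
    (a : G) : ∫⁻ y, ‖f y * g (y - a)‖ₑ ∂μ ≤ eLpNorm f p μ * eLpNorm g q μ := by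
  have ha := measurePreserving_sub_right μ a
  calc ∫⁻ y, ‖f y * g (y - a)‖ₑ ∂μ = eLpNorm (f • (g ∘ (· - a))) 1 μ := by
        rw [eLpNorm_one_eq_lintegral_enorm]; rfl
    _ ≤ eLpNorm f p μ * eLpNorm (g ∘ (· - a)) q μ :=
        eLpNorm_smul_le_mul_eLpNorm (hg.1.comp_measurePreserving ha) hf.1
    _ = eLpNorm f p μ * eLpNorm g q μ := by rw [eLpNorm_comp_measurePreserving hg.1 ha]

variable [MeasurableSub₂ G] [MeasurableSpace Z] [SFinite μ] {ν : Measure Z} [SFinite ν] {τ : Z → G}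

theorem quasiMeasurePreserving_snd_sub_comp_fst (hτ : Measurable τ) :
    Measure.QuasiMeasurePreserving (fun w : Z × G ↦ w.2 - τ w.1) (ν.prod μ) μ :=
  Measure.quasiMeasurePreserving_snd.comp
    ((MeasurePreserving.id ν).skew_product (g := fun z y ↦ y - τ z) (by fun_prop)
      (.of_forall fun z ↦ (measurePreserving_sub_right μ (τ z)).map_eq)).quasiMeasurePreserving

theorem integrable_prod_mul_mul_comp_sub {F : Z → R} {f g : G → R} (hF : Integrable F ν)
    (hf : MemLp f p μ) (hg : MemLp g q μ) (hτ : Measurable τ) :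
    Integrable (fun w : Z × G ↦ F w.1 * (f w.2 * g (w.2 - τ w.1))) (ν.prod μ) := by
  have hmeas : AEStronglyMeasurable (fun w : Z × G ↦ F w.1 * (f w.2 * g (w.2 - τ w.1)))
      (ν.prod μ) :=
    hF.1.comp_fst.mul (hf.1.comp_snd.mul
      (hg.1.comp_quasiMeasurePreserving (quasiMeasurePreserving_snd_sub_comp_fst hτ)))
  have henorm (a b : R) : ‖a * b‖ₑ ≤ ‖a‖ₑ * ‖b‖ₑ := by
    rw [← smul_eq_mul]; exact enorm_smul_le
  refine ⟨hmeas, ?_⟩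
  calc ∫⁻ w, ‖F w.1 * (f w.2 * g (w.2 - τ w.1))‖ₑ ∂ν.prod μ
      = ∫⁻ z, ∫⁻ y, ‖F z * (f y * g (y - τ z))‖ₑ ∂μ ∂ν := lintegral_prod _ hmeas.enorm
    _ ≤ ∫⁻ z, ‖F z‖ₑ * (eLpNorm f p μ * eLpNorm g q μ) ∂ν := by
        refine lintegral_mono fun z ↦ (lintegral_mono fun y ↦ henorm _ _).trans ?_
        rw [lintegral_const_mul' _ _ enorm_ne_top]
        gcongr
        exact lintegral_enorm_mul_comp_sub_right_le hf hg (τ z)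
    _ < ∞ := by
        rw [lintegral_mul_const' _ _ (ENNReal.mul_ne_top hf.2.ne hg.2.ne)]
        exact ENNReal.mul_lt_top hF.2 (ENNReal.mul_lt_top hf.2 hg.2)

end Translate

/-- The time-frequency shift `M_{z.2} T_{z.1} φ`: translation by `z.1` followed by modulation
by `z.2`. These are the functions that `V*_φ F` superposes, with weight `F`. -/
def timeFreqShift (z : EuclideanSpace ℝ (Fin d) × EuclideanSpace ℝ (Fin d))
    (φ : EuclideanSpace ℝ (Fin d) → ℂ) (y : EuclideanSpace ℝ (Fin d)) : ℂ :=
  Complex.exp ((⟪z.2, y⟫ : ℝ) * Complex.I) * φ (y - z.1)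

section TimeFrequencyShift

variable {p q : ℝ≥0∞} [p.HolderConjugate q] {φ φ₁ : EuclideanSpace ℝ (Fin d) → ℂ}
  {F : EuclideanSpace ℝ (Fin d) × EuclideanSpace ℝ (Fin d) → ℂ}

theorem VStar_eq_integral_timeFreqShift (φ : EuclideanSpace ℝ (Fin d) → ℂ)
    (F : EuclideanSpace ℝ (Fin d) × EuclideanSpace ℝ (Fin d) → ℂ) (t : EuclideanSpace ℝ (Fin d)) :
    VStar φ F t = ((2 * Real.pi) ^ (-(d : ℝ) / 2) : ℝ) * ∫ z, F z * timeFreqShift z φ t := by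
  simp only [VStar, timeFreqShift, mul_assoc]

theorem STFT_timeFreqShift (φ₁ φ : EuclideanSpace ℝ (Fin d) → ℂ)
    (z : EuclideanSpace ℝ (Fin d) × EuclideanSpace ℝ (Fin d)) (x ξ : EuclideanSpace ℝ (Fin d)) :
    STFT φ₁ (timeFreqShift z φ) x ξ =
      Complex.exp ((-⟪ξ - z.2, z.1⟫ : ℝ) * Complex.I) * STFT φ₁ φ (x - z.1) (ξ - z.2) := by
  have hphase (y : EuclideanSpace ℝ (Fin d)) :
      Complex.exp ((⟪z.2, y + z.1⟫ : ℝ) * Complex.I) *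
          Complex.exp (-(⟪ξ, y + z.1⟫ : ℝ) * Complex.I) =
        Complex.exp ((-⟪ξ - z.2, z.1⟫ : ℝ) * Complex.I) *
          Complex.exp (-(⟪ξ - z.2, y⟫ : ℝ) * Complex.I) := by
    rw [← Complex.exp_add, ← Complex.exp_add]
    congr 1
    simp only [inner_add_right, inner_sub_left]
    push_cast
    ring
  rw [STFT, STFT, ← integral_add_right_eq_self _ z.1, mul_left_comm,
    ← integral_const_mul (Complex.exp _)]
  congr 2 with y
  rw [timeFreqShift, add_sub_cancel_right, show y + z.1 - x = y - (x - z.1) by abel]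
  linear_combination φ y * (starRingEnd ℂ) (φ₁ (y - (x - z.1))) * hphase y

theorem norm_STFT_timeFreqShift (φ₁ φ : EuclideanSpace ℝ (Fin d) → ℂ)
    (z : EuclideanSpace ℝ (Fin d) × EuclideanSpace ℝ (Fin d)) (x ξ : EuclideanSpace ℝ (Fin d)) :
    ‖STFT φ₁ (timeFreqShift z φ) x ξ‖ = ‖STFT φ₁ φ (x - z.1) (ξ - z.2)‖ := by
  rw [STFT_timeFreqShift, norm_mul, Complex.norm_exp_ofReal_mul_I, one_mul]

theorem integrable_prod_mul_timeFreqShift_mul_conj (hφ : MemLp φ q) (hφ₁ : MemLp φ₁ p)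
    (hF : Integrable F) (x ξ : EuclideanSpace ℝ (Fin d)) :
    Integrable (fun w : (EuclideanSpace ℝ (Fin d) × EuclideanSpace ℝ (Fin d)) ×
        EuclideanSpace ℝ (Fin d) ↦
      F w.1 * (timeFreqShift w.1 φ w.2 * (starRingEnd ℂ) (φ₁ (w.2 - x)) *
        Complex.exp (-(⟪ξ, w.2⟫ : ℝ) * Complex.I))) (volume.prod volume) := by
  have hφ₁x : MemLp (fun y ↦ (starRingEnd ℂ) (φ₁ (y - x))) p :=
    (hφ₁.comp_measurePreserving (measurePreserving_sub_right volume x)).star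
  have hbase := integrable_prod_mul_mul_comp_sub hF hφ₁x hφ measurable_fst
  refine (hbase.bdd_mul (c := 1) (f := fun w ↦ Complex.exp ((⟪w.1.2, w.2⟫ : ℝ) * Complex.I) *
    Complex.exp ((-⟪ξ, w.2⟫ : ℝ) * Complex.I)) ?_ (.of_forall fun w ↦ ?_)).congr
    (.of_forall fun w ↦ ?_)
  · exact Continuous.aestronglyMeasurable (by fun_prop)
  · rw [norm_mul, Complex.norm_exp_ofReal_mul_I, Complex.norm_exp_ofReal_mul_I, one_mul]
  · simp only [timeFreqShift]
    push_cast
    ring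

theorem STFT_VStar (hφ : MemLp φ q) (hφ₁ : MemLp φ₁ p) (hF : Integrable F)
    (x ξ : EuclideanSpace ℝ (Fin d)) :
    STFT φ₁ (VStar φ F) x ξ = ((2 * Real.pi) ^ (-(d : ℝ) / 2) : ℝ) *
      ∫ z, F z * STFT φ₁ (timeFreqShift z φ) x ξ := by
  set c : ℂ := (((2 * Real.pi) ^ (-(d : ℝ) / 2) : ℝ) : ℂ) with hc
  let K (z : EuclideanSpace ℝ (Fin d) × EuclideanSpace ℝ (Fin d)) (y : EuclideanSpace ℝ (Fin d)) :=
    timeFreqShift z φ y * (starRingEnd ℂ) (φ₁ (y - x)) * Complex.exp (-(⟪ξ, y⟫ : ℝ) * Complex.I)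
  calc STFT φ₁ (VStar φ F) x ξ = c * ∫ y, c * ∫ z, F z * K z y := by
        simp only [STFT, VStar_eq_integral_timeFreqShift, K, mul_assoc, ← hc, ← integral_mul_const]
    _ = c * (c * ∫ z, ∫ y, F z * K z y) := by
        rw [integral_const_mul,
          ← integral_integral_swap (integrable_prod_mul_timeFreqShift_mul_conj hφ hφ₁ hF x ξ)]
    _ = c * ∫ z, F z * STFT φ₁ (timeFreqShift z φ) x ξ := by
        simp only [STFT, K, ← hc, mul_left_comm (F _) c, integral_const_mul]

theorem stmt17_general (hφ : MemLp φ q) (hφ₁ : MemLp φ₁ p) (hF : Integrable F)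
    (x ξ : EuclideanSpace ℝ (Fin d)) :
    ENNReal.ofReal ‖STFT φ₁ (VStar φ F) x ξ‖ ≤
      ENNReal.ofReal ((2 * Real.pi) ^ (-(d : ℝ) / 2)) *
        ∫⁻ z : EuclideanSpace ℝ (Fin d) × EuclideanSpace ℝ (Fin d),
          ENNReal.ofReal (‖F z‖ * ‖STFT φ₁ φ (x - z.1) (ξ - z.2)‖) := by
  have hc : (0 : ℝ) ≤ (2 * Real.pi) ^ (-(d : ℝ) / 2) := by positivity
  rw [STFT_VStar hφ hφ₁ hF, norm_mul, Complex.norm_of_nonneg hc, ENNReal.ofReal_mul hc]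
  gcongr
  calc ENNReal.ofReal ‖∫ z, F z * STFT φ₁ (timeFreqShift z φ) x ξ‖
      ≤ ∫⁻ z, ‖F z * STFT φ₁ (timeFreqShift z φ) x ξ‖ₑ := by
        rw [ofReal_norm]
        exact enorm_integral_le_lintegral_enorm _
    _ = ∫⁻ z, ENNReal.ofReal (‖F z‖ * ‖STFT φ₁ φ (x - z.1) (ξ - z.2)‖) := by
        simp only [← ofReal_norm, norm_mul, norm_STFT_timeFreqShift]

end TimeFrequencyShift

theorem stmt17 {d : ℕ} (φ φ₁ : SchwartzMap (EuclideanSpace ℝ (Fin d)) ℂ)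
    (F : EuclideanSpace ℝ (Fin d) × EuclideanSpace ℝ (Fin d) → ℂ) (hF : Integrable F)
    (x ξ : EuclideanSpace ℝ (Fin d)) :
    ENNReal.ofReal ‖STFT (⇑φ₁) (VStar (⇑φ) F) x ξ‖ ≤
      ENNReal.ofReal ((2 * Real.pi) ^ (-(d : ℝ) / 2)) *
        ∫⁻ z : EuclideanSpace ℝ (Fin d) × EuclideanSpace ℝ (Fin d),
          ENNReal.ofReal (‖F z‖ * ‖STFT (⇑φ₁) (⇑φ) (x - z.1) (ξ - z.2)‖) :=
  stmt17_general (p := 1) (q := ∞) (φ.memLp ∞) (φ₁.memLp 1) hF x ξ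

end Paper
end
end

section
/- Let s > 1, q ∈ [1,∞), let ω be an s-admissible weight on ℝ^d, let f ∈ L¹(ℝ^d) have compact support, and let (x₀, ξ₀) ∈ ℝ^d × (ℝ^d ∖ {0}). Then (x₀, ξ₀) ∉ WF_{FL^q_ω}(f) if and only if there exist an invertible d×d real matrix A, a constant c ∈ (0, 2π), a point x₁ ∈ ℝ^d, an s-cutoff φ with φ(x₀) ≠ 0 whose support is contained in the interior of x₁ + A([0,1]^d), and an open cone Γ containing ξ₀, such that Σ_{λ ∈ (c·(Aᵀ)^{−1}(ℤ^d)) ∩ Γ} (|ℱ(φf)(λ)|·ω(λ))^q < ∞. -/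
open MeasureTheory Complex Set
open scoped ENNReal RealInnerProductSpace NNReal

noncomputable section

namespace Paper

variable {d : ℕ}

/-! Both finiteness conditions say that `‖FT (φ f)‖ ω` is in `L^q` on a cone, once for Lebesgue
measure and once for counting measure on the dual lattice. For each of these measures `μ` one has
`FT (φ² f) ξ = c ∫ FT φ (ξ - η) FT (φ f) η dμ(η)`: for Lebesgue measure this is the convolution
theorem, for the lattice it comes from expanding `φ` into a Fourier series on a period box that
contains its support. As `FT φ` decays faster than every `exp (-N |ξ|^{1/s})`, and every translate
of such a kernel has uniformly bounded integral with respect to either measure, Schur's test moves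
`L^q` bounds from either measure to the other. The part of `FT (φ f)` outside the cone does not
matter after shrinking the cone, since there `|ξ - η|` dominates both `|ξ|` and `|η|`. So replacing
`φ` by `φ²` passes from one condition to the other. -/

local notation "𝔼" d:max => EuclideanSpace ℝ (Fin d)

section Subexponential

variable {E : Type*} [NormedAddCommGroup E] {s : ℝ}

/-- The kernel `exp (-‖x‖^{1/s})`: the reference profile against which the decay of Fourier
transforms of `s`-cutoffs is measured. -/
def subexpKernel (s : ℝ) (x : E) : ℝ :=
  Real.exp (-‖x‖ ^ (1 / s))

theorem subexpKernel_pos (s : ℝ) (x : E) : 0 < subexpKernel s x :=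
  Real.exp_pos _

theorem subexpKernel_le_one (s : ℝ) (x : E) : subexpKernel s x ≤ 1 :=
  Real.exp_le_one_iff.2 (neg_nonpos.2 (by positivity))

theorem subexpKernel_neg (s : ℝ) (x : E) : subexpKernel s (-x) = subexpKernel s x := by
  rw [subexpKernel, subexpKernel, norm_neg]

theorem subexpKernel_sub_comm (s : ℝ) (x y : E) :
    subexpKernel s (x - y) = subexpKernel s (y - x) := by
  rw [← subexpKernel_neg, neg_sub]

theorem continuous_subexpKernel (hs : 0 < s) : Continuous (subexpKernel s : E → ℝ) :=
  Real.continuous_exp.comp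
    (continuous_norm.rpow_const fun _ => Or.inr (one_div_pos.2 hs).le).neg

theorem norm_add_rpow_one_div_le (hs : 1 ≤ s) (x y : E) :
    ‖x + y‖ ^ (1 / s) ≤ ‖x‖ ^ (1 / s) + ‖y‖ ^ (1 / s) := by
  have hs₀ : 0 < s := by linarith
  calc ‖x + y‖ ^ (1 / s) ≤ (‖x‖ + ‖y‖) ^ (1 / s) := by gcongr; exact norm_add_le x y
    _ ≤ _ := Real.rpow_add_le_add_rpow (norm_nonneg x) (norm_nonneg y) (by positivity)
      ((div_le_one hs₀).2 hs)

theorem subexpKernel_le_exp_one_mul (hs : 1 ≤ s) {x y : E} (hxy : ‖y - x‖ ≤ 1) :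
    subexpKernel s x ≤ Real.exp 1 * subexpKernel s y := by
  rw [subexpKernel, subexpKernel, ← Real.exp_add, Real.exp_le_exp]
  have hadd : ‖y‖ ^ (1 / s) ≤ ‖y - x‖ ^ (1 / s) + ‖x‖ ^ (1 / s) := by
    simpa using norm_add_rpow_one_div_le hs (y - x) x
  have hone : ‖y - x‖ ^ (1 / s) ≤ 1 := Real.rpow_le_one (norm_nonneg _) hxy (by positivity)
  linarith

theorem integrable_subexpKernel [NormedSpace ℝ E] [FiniteDimensional ℝ E] [MeasurableSpace E]
    [BorelSpace E] (μ : Measure E) [μ.IsAddHaarMeasure] (hs : 0 < s) :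
    Integrable (subexpKernel s) μ := by
  refine Integrable.of_integral_ne_zero fun h => ?_
  have hball : μ (Metric.ball 0 1) = 0 := by
    rw [measure_unitBall_eq_integral_div_gamma μ (one_div_pos.2 hs)]
    change ENNReal.ofReal ((∫ x, subexpKernel s x ∂μ) / _) = 0
    rw [h, zero_div, ENNReal.ofReal_zero]
  exact (Metric.measure_ball_pos μ 0 one_pos).ne' hball

end Subexponential

theorem lintegral_lintegral_ball_comm {E : Type*} [PseudoMetricSpace E]
    [SecondCountableTopology E] [MeasurableSpace E] [OpensMeasurableSpace E] (μ ν : Measure E)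
    [SFinite μ] [SFinite ν] (r : ℝ) {k : E → ℝ≥0∞} (hk : Measurable k) :
    ∫⁻ y, ∫⁻ z in Metric.ball y r, k z ∂ν ∂μ = ∫⁻ z, ∫⁻ _ in Metric.ball z r, k z ∂μ ∂ν := by
  let near : Set (E × E) := {p | dist p.2 p.1 < r}
  have hnear : MeasurableSet near :=
    measurableSet_lt (measurable_snd.dist measurable_fst) measurable_const
  calc _ = ∫⁻ y, ∫⁻ z, near.indicator (fun p => k p.2) (y, z) ∂ν ∂μ :=
        lintegral_congr fun y => (lintegral_indicator measurableSet_ball k).symm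
    _ = ∫⁻ z, ∫⁻ y, near.indicator (fun p => k p.2) (y, z) ∂μ ∂ν :=
        lintegral_lintegral_swap ((hk.comp measurable_snd).indicator hnear).aemeasurable
    _ = _ := lintegral_congr fun z => by
        rw [← lintegral_indicator measurableSet_ball]
        refine lintegral_congr fun y => ?_
        simp only [near, indicator, Metric.mem_ball, dist_comm y z, mem_ofPred_eq]

section TranslationBounded

variable {E : Type*} [NormedAddCommGroup E] [MeasurableSpace E] {μ : Measure E} {s : ℝ}

/-- A measure is translation bounded if all balls of radius one have uniformly bounded mass. The
notion covers Lebesgue measure and the counting measure of a lattice alike. -/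
def TranslationBounded (μ : Measure E) : Prop :=
  ∃ B : ℝ≥0∞, B ≠ ∞ ∧ ∀ x, μ (Metric.ball x 1) ≤ B

variable [BorelSpace E]

theorem measure_unitBall_mul_subexpKernel_le (μ : Measure E) [μ.IsAddHaarMeasure]
    (hs : 1 ≤ s) (x y : E) :
    μ (Metric.ball 0 1) * ENNReal.ofReal (subexpKernel s (x - y)) ≤
      ∫⁻ z in Metric.ball y 1, ENNReal.ofReal (Real.exp 1 * subexpKernel s (x - z)) ∂μ := by
  calc _ = ∫⁻ _ in Metric.ball y 1, ENNReal.ofReal (subexpKernel s (x - y)) ∂μ := by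
        rw [setLIntegral_const, μ.addHaar_ball_center y, mul_comm]
    _ ≤ _ := setLIntegral_mono' measurableSet_ball fun z hz =>
        ENNReal.ofReal_le_ofReal (subexpKernel_le_exp_one_mul hs ?_)
  rw [sub_sub_sub_cancel_left, ← dist_eq_norm, dist_comm]
  exact (Metric.mem_ball.1 hz).le

variable [NormedSpace ℝ E] [FiniteDimensional ℝ E]

theorem translationBounded_of_isAddHaarMeasure (μ : Measure E) [μ.IsAddHaarMeasure] :
    TranslationBounded μ :=
  ⟨μ (Metric.ball 0 1), measure_ball_lt_top.ne, fun x => (μ.addHaar_ball_center x 1).le⟩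

theorem TranslationBounded.exists_lintegral_subexpKernel_le [SFinite μ]
    (hμ : TranslationBounded μ) (hs : 1 ≤ s) :
    ∃ B : ℝ≥0∞, B ≠ ∞ ∧ ∀ x, ∫⁻ y, ENNReal.ofReal (subexpKernel s (x - y)) ∂μ ≤ B := by
  obtain ⟨B, hB, hμB⟩ := hμ
  have hs₀ : 0 < s := by linarith
  let haar : Measure E := Measure.addHaar
  set V := haar (Metric.ball 0 1)
  let k : E → ℝ≥0∞ := fun x => ENNReal.ofReal (Real.exp 1 * subexpKernel s x)
  have hk : Measurable k :=
    ((continuous_subexpKernel hs₀).const_mul _).measurable.ennreal_ofReal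
  have hk_int : ∫⁻ x, k x ∂haar ≠ ∞ :=
    ((integrable_subexpKernel haar hs₀).const_mul _).lintegral_lt_top.ne
  have hV : V ≠ 0 := (Metric.measure_ball_pos haar 0 one_pos).ne'
  have hV' : V ≠ ∞ := measure_ball_lt_top.ne
  refine ⟨V⁻¹ * (B * ∫⁻ x, k x ∂haar), by finiteness, fun x => ?_⟩
  rw [← ENNReal.div_eq_inv_mul, ENNReal.le_div_iff_mul_le (Or.inl hV) (Or.inl hV'), mul_comm,
    ← lintegral_const_mul' _ _ hV']
  calc ∫⁻ y, V * ENNReal.ofReal (subexpKernel s (x - y)) ∂μ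
      ≤ ∫⁻ y, ∫⁻ z in Metric.ball y 1, k (x - z) ∂haar ∂μ :=
        lintegral_mono fun y => measure_unitBall_mul_subexpKernel_le haar hs x y
    _ = ∫⁻ z, ∫⁻ _ in Metric.ball z 1, k (x - z) ∂μ ∂haar :=
        lintegral_lintegral_ball_comm μ haar 1 (hk.comp (measurable_const.sub measurable_id))
    _ ≤ ∫⁻ z, B * k (x - z) ∂haar := lintegral_mono fun z => by
        rw [setLIntegral_const, mul_comm]
        gcongr
        exact hμB z
    _ = B * ∫⁻ z, k z ∂haar := by
        rw [lintegral_const_mul' _ _ hB, lintegral_sub_left_eq_self k x]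

theorem TranslationBounded.integrable_subexpKernel_sub [SFinite μ] (hμ : TranslationBounded μ)
    (hs : 1 ≤ s) (x : E) : Integrable (fun y => subexpKernel s (x - y)) μ := by
  obtain ⟨B, hB, hμB⟩ := hμ.exists_lintegral_subexpKernel_le hs
  refine ⟨((continuous_subexpKernel (by linarith)).comp
    (continuous_const.sub continuous_id)).aestronglyMeasurable, ?_⟩
  rw [hasFiniteIntegral_iff_ofReal (ae_of_all _ fun y => (subexpKernel_pos s _).le)]
  exact (hμB x).trans_lt hB.lt_top

theorem TranslationBounded.memLp_subexpKernel [SFinite μ] (hμ : TranslationBounded μ)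
    (hs : 1 ≤ s) {q : ℝ} (hq : 1 ≤ q) : MemLp (subexpKernel s) (ENNReal.ofReal q) μ := by
  have hmeas : Measurable (subexpKernel s : E → ℝ) :=
    (continuous_subexpKernel (by linarith)).measurable
  have hint : Integrable (subexpKernel s : E → ℝ) μ := by
    simpa only [zero_sub, subexpKernel_neg] using hμ.integrable_subexpKernel_sub hs 0
  have hq₀ : 0 < q := by linarith
  rw [← integrable_norm_rpow_iff hmeas.aestronglyMeasurable (by simpa using hq₀) (by simp),
    ENNReal.toReal_ofReal hq₀.le]
  refine hint.mono' (hmeas.norm.pow_const q).aestronglyMeasurable (ae_of_all _ fun x => ?_)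
  rw [Real.norm_of_nonneg (subexpKernel_pos s x).le,
    Real.norm_of_nonneg (Real.rpow_nonneg (subexpKernel_pos s x).le q)]
  exact Real.rpow_le_self_of_le_one (subexpKernel_pos s x).le (subexpKernel_le_one s x) hq

end TranslationBounded

section Schur

theorem rpow_lintegral_mul_le {X : Type*} [MeasurableSpace X] (μ : Measure X) {q : ℝ} (hq : 1 ≤ q)
    {h k : X → ℝ≥0∞} (hh : Measurable h) (hk : Measurable k) :
    (∫⁻ x, h x * k x ∂μ) ^ q ≤ (∫⁻ x, k x ∂μ) ^ (q - 1) * ∫⁻ x, h x ^ q * k x ∂μ := by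
  have hq₀ : 0 < q := by linarith
  have hmono := eLpNorm_le_eLpNorm_mul_rpow_measure_univ (μ := μ.withDensity k)
    (f := h) (p := 1) (q := ENNReal.ofReal q) (by simpa using ENNReal.ofReal_le_ofReal hq)
    hh.aestronglyMeasurable
  rw [eLpNorm_one_eq_lintegral_enorm, eLpNorm_eq_lintegral_rpow_enorm_toReal
    (by simpa using hq₀) ENNReal.ofReal_ne_top, ENNReal.toReal_ofReal hq₀.le] at hmono
  simp only [enorm_eq_self] at hmono
  rw [lintegral_withDensity_eq_lintegral_mul _ hk hh,
    lintegral_withDensity_eq_lintegral_mul _ hk (hh.pow_const q),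
    withDensity_apply _ MeasurableSet.univ, Measure.restrict_univ] at hmono
  have hpow := ENNReal.rpow_le_rpow hmono hq₀.le
  rw [ENNReal.mul_rpow_of_nonneg _ _ hq₀.le, ← ENNReal.rpow_mul, ← ENNReal.rpow_mul,
    show 1 / q * q = 1 by field_simp,
    show (1 / (1 : ℝ≥0∞).toReal - 1 / q) * q = q - 1 by simp; field_simp,
    ENNReal.rpow_one] at hpow
  simpa only [Pi.mul_apply, mul_comm (k _), mul_comm (_ ^ (q - 1))] using hpow

theorem lintegral_rpow_lintegral_mul_le {X Y : Type*} [MeasurableSpace X] [MeasurableSpace Y]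
    (μ : Measure X) (ν : Measure Y) [SFinite μ] [SFinite ν] {q : ℝ} (hq : 1 ≤ q)
    {h : X → ℝ≥0∞} (hh : Measurable h) {K : Y → X → ℝ≥0∞}
    (hK : Measurable (Function.uncurry K)) {B₁ B₂ : ℝ≥0∞}
    (hB₁ : ∀ y, ∫⁻ x, K y x ∂μ ≤ B₁) (hB₂ : ∀ x, ∫⁻ y, K y x ∂ν ≤ B₂) :
    ∫⁻ y, (∫⁻ x, h x * K y x ∂μ) ^ q ∂ν ≤ B₁ ^ (q - 1) * (B₂ * ∫⁻ x, h x ^ q ∂μ) := by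
  have hhK : Measurable (Function.uncurry fun y x => h x ^ q * K y x) :=
    ((hh.pow_const q).comp measurable_snd).mul hK
  calc _ ≤ ∫⁻ y, B₁ ^ (q - 1) * ∫⁻ x, h x ^ q * K y x ∂μ ∂ν := lintegral_mono fun y => by
        refine (rpow_lintegral_mul_le μ hq hh hK.of_uncurry_left).trans ?_
        gcongr
        exact hB₁ y
    _ = B₁ ^ (q - 1) * ∫⁻ x, ∫⁻ y, h x ^ q * K y x ∂ν ∂μ := by
        rw [← lintegral_lintegral_swap hhK.aemeasurable]
        exact lintegral_const_mul _ hhK.lintegral_prod_right'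
    _ ≤ B₁ ^ (q - 1) * ∫⁻ x, B₂ * h x ^ q ∂μ := by
        gcongr with x
        rw [lintegral_const_mul _ hK.of_uncurry_right, mul_comm]
        gcongr
        exact hB₂ x
    _ = _ := by rw [lintegral_const_mul _ (hh.pow_const q)]

end Schur

section LatticeMeasure

variable {ι E : Type*} [Finite ι] [NormedAddCommGroup E] [NormedSpace ℝ E] [MeasurableSpace E]

/-- The counting measure of the lattice `M(ℤ^ι)`. -/
def latticeMeasure (M : (ι → ℝ) ≃L[ℝ] E) : Measure E :=
  Measure.map (fun k : ι → ℤ => M fun i => (k i : ℝ)) Measure.count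

instance (M : (ι → ℝ) ≃L[ℝ] E) : SFinite (latticeMeasure M) :=
  inferInstanceAs (SFinite (Measure.map _ _))

theorem latticeMeasure_apply (M : (ι → ℝ) ≃L[ℝ] E) {S : Set E} (hS : MeasurableSet S) :
    latticeMeasure M S = Measure.count {k : ι → ℤ | M (fun i => (k i : ℝ)) ∈ S} :=
  Measure.map_apply (measurable_of_countable _) hS

theorem translationBounded_latticeMeasure [BorelSpace E] (M : (ι → ℝ) ≃L[ℝ] E) :
    TranslationBounded (latticeMeasure M) := by
  classical
  cases nonempty_fintype ι
  obtain ⟨N, hN⟩ := exists_nat_ge (‖(M.symm : E →L[ℝ] ι → ℝ)‖ + 1)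
  let cube : Finset (ι → ℤ) := Fintype.piFinset fun _ => Finset.Icc (-N : ℤ) N
  refine ⟨cube.card, ENNReal.natCast_ne_top _, fun x => ?_⟩
  let corner : ι → ℤ := fun i => ⌊M.symm x i⌋
  have hsub : {k : ι → ℤ | M (fun i => (k i : ℝ)) ∈ Metric.ball x 1} ⊆
      cube.image (corner + ·) := by
    intro k hk
    simp only [Finset.coe_image, mem_image, Finset.mem_coe]
    refine ⟨k - corner, Fintype.mem_piFinset.2 fun i => ?_, add_sub_cancel _ _⟩
    have hclose : |k i - M.symm x i| ≤ ‖(M.symm : E →L[ℝ] ι → ℝ)‖ := by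
      have hnorm := (M.symm : E →L[ℝ] ι → ℝ).le_opNorm_of_le (mem_ball_iff_norm.1 hk).le
      rw [map_sub, ContinuousLinearEquiv.coe_coe, M.symm_apply_apply, mul_one] at hnorm
      exact (norm_le_pi_norm _ i).trans hnorm
    have hfloor := Int.floor_le (M.symm x i)
    have hfloor' := Int.lt_floor_add_one (M.symm x i)
    rw [abs_le] at hclose
    rw [Finset.mem_Icc, Pi.sub_apply, ← Int.cast_le (R := ℝ), ← Int.cast_le (R := ℝ)]
    push_cast
    constructor <;> linarith
  rw [latticeMeasure_apply M measurableSet_ball]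
  calc _ ≤ Measure.count (cube.image (corner + ·) : Set (ι → ℤ)) := measure_mono hsub
    _ = (cube.image (corner + ·)).card := Measure.count_apply_finset _
    _ ≤ cube.card := by exact_mod_cast Finset.card_image_le

theorem integrable_latticeMeasure_iff (M : (ι → ℝ) ≃L[ℝ] E) {F : Type*} [NormedAddCommGroup F]
    {f : E → F} (hf : AEStronglyMeasurable f (latticeMeasure M)) :
    Integrable f (latticeMeasure M) ↔ Summable fun k : ι → ℤ => ‖f (M fun i => (k i : ℝ))‖ := by
  rw [latticeMeasure, integrable_map_measure hf (measurable_of_countable _).aemeasurable,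
    integrable_count_iff]
  rfl

theorem memLp_restrict_latticeMeasure_iff (M : (ι → ℝ) ≃L[ℝ] E) {q : ℝ} (hq : 0 < q) {u : E → ℝ}
    (hu : Measurable u) (hu₀ : ∀ x, 0 ≤ u x) {Γ : Set E} (hΓ : MeasurableSet Γ) :
    MemLp u (ENNReal.ofReal q) ((latticeMeasure M).restrict Γ) ↔
      Summable fun k : ι → ℤ => Γ.indicator (fun x => u x ^ q) (M fun i => (k i : ℝ)) := by
  have hpow : (fun x => ‖u x‖ ^ q) = fun x => u x ^ q :=
    funext fun x => by rw [Real.norm_of_nonneg (hu₀ x)]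
  rw [← integrable_norm_rpow_iff hu.aestronglyMeasurable (by simpa using hq) ENNReal.ofReal_ne_top,
    ENNReal.toReal_ofReal hq.le, hpow, ← IntegrableOn, ← integrable_indicator_iff hΓ,
    integrable_latticeMeasure_iff M ((hu.pow_const q).indicator hΓ).aestronglyMeasurable]
  exact summable_norm_iff

theorem hasSum_integral_latticeMeasure (M : (ι → ℝ) ≃L[ℝ] E) {F : Type*} [NormedAddCommGroup F]
    [NormedSpace ℝ F] [CompleteSpace F] {f : E → F} (hf : Integrable f (latticeMeasure M)) :
    HasSum (fun k : ι → ℤ => f (M fun i => (k i : ℝ))) (∫ x, f x ∂latticeMeasure M) := by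
  have hM : AEMeasurable (fun k : ι → ℤ => M fun i => (k i : ℝ)) Measure.count :=
    (measurable_of_countable _).aemeasurable
  rw [latticeMeasure, integral_map hM hf.1]
  have hsum := hasSum_integral_measure ((integrable_map_measure hf.1 hM).1 hf)
  simpa only [Measure.count, integral_dirac, Function.comp_apply] using hsum

end LatticeMeasure

section SchurSubexponential

variable {E F F' : Type*} [NormedAddCommGroup E] [NormedSpace ℝ E] [FiniteDimensional ℝ E]
  [MeasurableSpace E] [BorelSpace E] [NormedAddCommGroup F] [MeasurableSpace F] [BorelSpace F]
  [NormedAddCommGroup F'] {μ ν : Measure E} {s q : ℝ}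

theorem TranslationBounded.restrict {E : Type*} [NormedAddCommGroup E] [MeasurableSpace E]
    {μ : Measure E} (hμ : TranslationBounded μ) (S : Set E) : TranslationBounded (μ.restrict S) :=
  let ⟨B, hB, hμB⟩ := hμ
  ⟨B, hB, fun x => (Measure.restrict_apply_le S _).trans (hμB x)⟩

theorem memLp_of_enorm_le_lintegral_subexpKernel [SFinite μ] [SFinite ν]
    (hμ : TranslationBounded μ) (hν : TranslationBounded ν) (hs : 1 ≤ s) (hq : 1 ≤ q)
    {h : E → F} (hhm : Measurable h) (hh : MemLp h (ENNReal.ofReal q) μ)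
    {u : E → F'} (hum : AEStronglyMeasurable u ν) {A : ℝ≥0∞} (hA : A ≠ ∞)
    (hu : ∀ᵐ x ∂ν, ‖u x‖ₑ ≤ A * ∫⁻ y, ‖h y‖ₑ * ENNReal.ofReal (subexpKernel s (x - y)) ∂μ) :
    MemLp u (ENNReal.ofReal q) ν := by
  have hs₀ : 0 < s := by linarith
  have hq₀ : 0 < q := by linarith
  obtain ⟨B₁, hB₁, hμB₁⟩ := hμ.exists_lintegral_subexpKernel_le hs
  obtain ⟨B₂, hB₂, hνB₂⟩ := hν.exists_lintegral_subexpKernel_le hs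
  have hhq := lintegral_rpow_enorm_lt_top_of_eLpNorm_lt_top (by simpa using hq₀)
    ENNReal.ofReal_ne_top hh.eLpNorm_lt_top
  have hschur := lintegral_rpow_lintegral_mul_le μ ν hq hhm.enorm
    (K := fun x y => ENNReal.ofReal (subexpKernel s (x - y)))
    ((continuous_subexpKernel hs₀).comp continuous_sub).measurable.ennreal_ofReal hμB₁
    fun y => by simpa only [subexpKernel_sub_comm s _ y] using hνB₂ y
  refine ⟨hum, (eLpNorm_lt_top_iff_lintegral_rpow_enorm_lt_top (by simpa using hq₀)
    ENNReal.ofReal_ne_top).2 ?_⟩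
  rw [ENNReal.toReal_ofReal hq₀.le] at hhq ⊢
  calc ∫⁻ x, ‖u x‖ₑ ^ q ∂ν
      ≤ ∫⁻ x, A ^ q * (∫⁻ y, ‖h y‖ₑ * ENNReal.ofReal (subexpKernel s (x - y)) ∂μ) ^ q ∂ν := by
        refine lintegral_mono_ae (hu.mono fun x hx => ?_)
        rw [← ENNReal.mul_rpow_of_nonneg _ _ hq₀.le]
        gcongr
    _ ≤ A ^ q * (B₁ ^ (q - 1) * (B₂ * ∫⁻ y, ‖h y‖ₑ ^ q ∂μ)) := by
        rw [lintegral_const_mul' _ _ (ENNReal.rpow_ne_top_of_nonneg hq₀.le hA)]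
        gcongr
    _ < ∞ := by
        have := ENNReal.rpow_ne_top_of_nonneg (by linarith : 0 ≤ q - 1) hB₁
        finiteness

end SchurSubexponential

section Cones

theorem norm_le_mul_norm_sub_of_norm_sub_lt {E : Type*} [SeminormedAddCommGroup E] {r : ℝ}
    (hr : 0 < r) {ξ₀ ξ η : E} (hξ : ‖ξ - ξ₀‖ < r) (hη : 2 * r ≤ ‖η - ξ₀‖) :
    ‖η‖ ≤ (1 + (‖ξ₀‖ + r) / r) * ‖ξ - η‖ := by
  have hr_le : r ≤ ‖ξ - η‖ := by
    linarith [norm_sub_le_norm_sub_add_norm_sub η ξ ξ₀, norm_sub_rev η ξ]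
  calc ‖η‖ ≤ ‖ξ - η‖ + (‖ξ₀‖ + r) := by
        linarith [norm_sub_norm_le η ξ, norm_sub_norm_le ξ ξ₀, norm_sub_rev η ξ]
    _ ≤ ‖ξ - η‖ + (‖ξ₀‖ + r) / r * ‖ξ - η‖ := by
        gcongr
        rw [div_mul_eq_mul_div, le_div_iff₀ hr]
        gcongr
    _ = _ := by ring

theorem IsCone.smul_mem_iff {Γ : Set (𝔼 d)} (hΓ : IsCone Γ) {t : ℝ} (ht : 0 < t) {ξ : 𝔼 d} :
    t • ξ ∈ Γ ↔ ξ ∈ Γ :=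
  ⟨fun h => by simpa [smul_smul, ht.ne'] using hΓ.2 _ h t⁻¹ (inv_pos.2 ht), fun h => hΓ.2 ξ h t ht⟩

theorem IsCone.exists_isCone_norm_le_mul {Γ : Set (𝔼 d)} (hΓ : IsCone Γ) (hΓo : IsOpen Γ)
    {ξ₀ : 𝔼 d} (hξ₀ : ξ₀ ∈ Γ) :
    ∃ Γ' : Set (𝔼 d), IsOpen Γ' ∧ IsCone Γ' ∧ ξ₀ ∈ Γ' ∧
      ∃ D : ℝ, 0 ≤ D ∧ ∀ ξ ∈ Γ', ∀ η ∉ Γ, ‖η‖ ≤ D * ‖ξ - η‖ := by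
  obtain ⟨ε, hε, hball⟩ := Metric.isOpen_iff.1 hΓo ξ₀ hξ₀
  have hr : 0 < ε / 2 := half_pos hε
  refine ⟨⋃ t ∈ Ioi (0 : ℝ), (t • ·) ⁻¹' Metric.ball ξ₀ (ε / 2), ?_, ⟨?_, ?_⟩, ?_,
    1 + (‖ξ₀‖ + ε / 2) / (ε / 2), by positivity, ?_⟩ <;>
    simp only [mem_iUnion, mem_preimage, exists_prop, mem_Ioi]
  · exact isOpen_biUnion fun t _ => Metric.isOpen_ball.preimage (continuous_const_smul t)
  · rintro ⟨t, _, h⟩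
    rw [smul_zero] at h
    exact hΓ.1 (hball (Metric.ball_subset_ball (half_le_self hε.le) h))
  · rintro ξ ⟨t, ht, hξ⟩ u hu
    exact ⟨t / u, by positivity, by rwa [smul_smul, div_mul_cancel₀ _ hu.ne']⟩
  · exact ⟨1, one_pos, by simpa using hε⟩
  · rintro ξ ⟨t, ht, hξ⟩ η hη
    have hfar : ε ≤ ‖t • η - ξ₀‖ := by
      by_contra! hlt
      exact hη ((hΓ.smul_mem_iff ht).1 (hball (mem_ball_iff_norm.2 hlt)))
    have hscaled := norm_le_mul_norm_sub_of_norm_sub_lt hr (mem_ball_iff_norm.1 hξ)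
      (by linarith : 2 * (ε / 2) ≤ ‖t • η - ξ₀‖)
    rw [← smul_sub, norm_smul, norm_smul, Real.norm_of_nonneg ht.le, mul_left_comm] at hscaled
    exact le_of_mul_le_mul_left hscaled ht

end Cones

section Weights

/-- `K` decays faster than every `exp (-N ‖ξ‖^{1/s})`, as the Fourier transform of an `s`-cutoff
does. -/
def SubexpDecay {E F : Type*} [Norm E] [Norm F] (s : ℝ) (K : E → F) : Prop :=
  ∀ N : ℝ, 0 < N → ∃ C : ℝ, 0 < C ∧ ∀ ξ, ‖K ξ‖ ≤ C * Real.exp (-N * ‖ξ‖ ^ (1 / s))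

theorem SubexpDecay.exists_norm_le_mul_subexpKernel {E F : Type*} [NormedAddCommGroup E] [Norm F]
    {s : ℝ} {K : E → F} (hK : SubexpDecay s K) : ∃ C : ℝ, ∀ ξ, ‖K ξ‖ ≤ C * subexpKernel s ξ :=
  let ⟨C, _, hC⟩ := hK 1 one_pos
  ⟨C, by simpa only [subexpKernel, neg_one_mul] using hC⟩

variable {F : Type*} [Norm F] {s : ℝ} {ω : 𝔼 d → ℝ} {K : 𝔼 d → F}

theorem IsSAdmissible.exists_le_exp_mul (hω : IsSAdmissible s ω) :
    ∃ C k : ℝ, 0 < C ∧ 0 < k ∧ ∀ x y, ω (x + y) ≤ C * Real.exp (k * ‖x‖ ^ (1 / s)) * ω y := by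
  obtain ⟨-, hω₀, v, -, -, -, -, C₀, k, C₁, hC₀, hk, hC₁, hv, hωv⟩ := hω
  refine ⟨C₁ * C₀, k, by positivity, hk, fun x y => (hωv x y).trans ?_⟩
  rw [mul_assoc C₁ C₀]
  have := (hω₀ y).le
  gcongr
  exact hv x

theorem IsSAdmissible.exists_norm_mul_le_exp (hω : IsSAdmissible s ω) (hK : SubexpDecay s K) {N : ℝ}
    (hN : 0 < N) : ∃ C : ℝ, 0 < C ∧
      ∀ ξ η, ‖K (ξ - η)‖ * ω ξ ≤ C * (ω η * Real.exp (-N * ‖ξ - η‖ ^ (1 / s))) := by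
  obtain ⟨C₁, k, hC₁, hk, hω_le⟩ := hω.exists_le_exp_mul
  obtain ⟨C₂, hC₂, hK_le⟩ := hK (N + k) (by positivity)
  have hω₀ := hω.2.1
  refine ⟨C₁ * C₂, by positivity, fun ξ η => ?_⟩
  have hωξ := hω_le (ξ - η) η
  rw [sub_add_cancel] at hωξ
  calc ‖K (ξ - η)‖ * ω ξ
      ≤ (C₂ * Real.exp (-(N + k) * ‖ξ - η‖ ^ (1 / s))) *
          (C₁ * Real.exp (k * ‖ξ - η‖ ^ (1 / s)) * ω η) :=
        mul_le_mul (hK_le _) hωξ (hω₀ ξ).le (by positivity)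
    _ = C₁ * C₂ * (ω η * (Real.exp (-(N + k) * ‖ξ - η‖ ^ (1 / s)) *
          Real.exp (k * ‖ξ - η‖ ^ (1 / s)))) := by ring
    _ = _ := by rw [← Real.exp_add]; ring_nf

theorem IsSAdmissible.exists_norm_mul_le_subexpKernel (hω : IsSAdmissible s ω)
    (hK : SubexpDecay s K) : ∃ C : ℝ, 0 < C ∧
      ∀ ξ η, ‖K (ξ - η)‖ * ω ξ ≤ C * (ω η * subexpKernel s (ξ - η)) := by
  simpa only [subexpKernel, neg_one_mul] using hω.exists_norm_mul_le_exp hK one_pos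

theorem IsSAdmissible.exists_norm_mul_le_subexpKernel_mul (hs : 0 < s) (hω : IsSAdmissible s ω)
    (hK : SubexpDecay s K) {D : ℝ} (hD : 0 ≤ D) : ∃ C : ℝ, 0 < C ∧
      ∀ ξ η, ‖η‖ ≤ D * ‖ξ - η‖ →
        ‖K (ξ - η)‖ * ω ξ ≤ C * (subexpKernel s η * subexpKernel s (ξ - η)) := by
  obtain ⟨C₁, k, hC₁, hk, hω_le⟩ := hω.exists_le_exp_mul
  obtain ⟨C₂, hC₂, hK_le⟩ :=
    hω.exists_norm_mul_le_exp hK (N := 1 + (k + 1) * D ^ (1 / s)) (by positivity)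
  have hω₀ := hω.2.1 0
  refine ⟨C₂ * (C₁ * ω 0), by positivity, fun ξ η hle => ?_⟩
  have hpow : ‖η‖ ^ (1 / s) ≤ D ^ (1 / s) * ‖ξ - η‖ ^ (1 / s) := by
    rw [← Real.mul_rpow hD (norm_nonneg _)]
    gcongr
  have hωη := hω_le η 0
  rw [add_zero] at hωη
  calc _ ≤ C₂ * (ω η * Real.exp (-(1 + (k + 1) * D ^ (1 / s)) * ‖ξ - η‖ ^ (1 / s))) := hK_le ξ η
    _ ≤ C₂ * (C₁ * Real.exp (k * ‖η‖ ^ (1 / s)) * ω 0 *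
          Real.exp (-‖ξ - η‖ ^ (1 / s) - (k + 1) * ‖η‖ ^ (1 / s))) := by
        gcongr
        linarith [mul_le_mul_of_nonneg_left hpow (by positivity : 0 ≤ k + 1)]
    _ = C₂ * (C₁ * ω 0) * (Real.exp (k * ‖η‖ ^ (1 / s)) *
          Real.exp (-‖ξ - η‖ ^ (1 / s) - (k + 1) * ‖η‖ ^ (1 / s))) := by ring
    _ = _ := by
        rw [subexpKernel, subexpKernel, ← Real.exp_add, ← Real.exp_add]
        ring_nf

end Weights

section Transfer

variable {s q : ℝ} {ω : 𝔼 d → ℝ} {Γ : Set (𝔼 d)} {G H K : 𝔼 d → ℂ} {ξ₀ : 𝔼 d}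
  {μ ν : Measure (𝔼 d)}

/-- The part of `G` inside the cone `Γ`, weighted by `ω`, plus a subexponential tail which absorbs
the part of `G` outside `Γ` when a point of a narrower cone looks at it. -/
def conicMajorant (s : ℝ) (ω : 𝔼 d → ℝ) (Γ : Set (𝔼 d)) (G : 𝔼 d → ℂ) (η : 𝔼 d) : ℝ :=
  Γ.indicator (fun ξ => ‖G ξ‖ * ω ξ) η + subexpKernel s η

theorem conicMajorant_nonneg (hω : IsSAdmissible s ω) (η : 𝔼 d) :
    0 ≤ conicMajorant s ω Γ G η :=
  add_nonneg (indicator_nonneg (fun ξ _ => mul_nonneg (norm_nonneg _) (hω.2.1 ξ).le) η)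
    (subexpKernel_pos s η).le

theorem measurable_conicMajorant (hs : 0 < s) (hω : IsSAdmissible s ω) (hΓ : MeasurableSet Γ)
    (hG : Measurable G) : Measurable (conicMajorant s ω Γ G) :=
  ((hG.norm.mul hω.1).indicator hΓ).add (continuous_subexpKernel hs).measurable

theorem memLp_conicMajorant [SFinite μ] (hμ : TranslationBounded μ) (hs : 1 ≤ s) (hq : 1 ≤ q)
    (hΓ : MeasurableSet Γ)
    (hGΓ : MemLp (fun ξ => ‖G ξ‖ * ω ξ) (ENNReal.ofReal q) (μ.restrict Γ)) :
    MemLp (conicMajorant s ω Γ G) (ENNReal.ofReal q) μ :=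
  ((memLp_indicator_iff_restrict hΓ).2 hGΓ).add (hμ.memLp_subexpKernel hs hq)

theorem exists_isCone_norm_mul_le_conicMajorant (hs : 0 < s) (hω : IsSAdmissible s ω)
    (hK : SubexpDecay s K) {b : ℝ} (hG : ∀ η, ‖G η‖ ≤ b) (hΓo : IsOpen Γ) (hΓ : IsCone Γ)
    (hξ₀ : ξ₀ ∈ Γ) :
    ∃ Γ' : Set (𝔼 d), IsOpen Γ' ∧ IsCone Γ' ∧ ξ₀ ∈ Γ' ∧ ∃ A : ℝ, 0 ≤ A ∧ ∀ ξ ∈ Γ', ∀ η,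
      ω ξ * ‖K (ξ - η) * G η‖ ≤ A * (conicMajorant s ω Γ G η * subexpKernel s (ξ - η)) := by
  obtain ⟨Γ', hΓ'o, hΓ', hξ₀', D, hD, hΓD⟩ := hΓ.exists_isCone_norm_le_mul hΓo hξ₀
  obtain ⟨C₁, hC₁, hnear⟩ := hω.exists_norm_mul_le_subexpKernel hK
  obtain ⟨C₂, hC₂, hfar⟩ := hω.exists_norm_mul_le_subexpKernel_mul hs hK hD
  have hb : 0 ≤ b := (norm_nonneg _).trans (hG 0)
  refine ⟨Γ', hΓ'o, hΓ', hξ₀', C₁ + C₂ * b, by positivity, fun ξ hξ η => ?_⟩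
  have hker := subexpKernel_pos s η
  have hker' := subexpKernel_pos s (ξ - η)
  have hωη := hω.2.1 η
  have hG' := norm_nonneg (G η)
  rw [norm_mul, mul_comm, mul_right_comm, conicMajorant]
  by_cases hη : η ∈ Γ
  · rw [indicator_of_mem hη]
    calc _ ≤ C₁ * (ω η * subexpKernel s (ξ - η)) * ‖G η‖ :=
        mul_le_mul_of_nonneg_right (hnear ξ η) hG'
      _ = C₁ * (‖G η‖ * ω η * subexpKernel s (ξ - η)) := by ring
      _ ≤ _ := by
        gcongr
        · exact le_add_of_nonneg_right (by positivity)
        · exact le_add_of_nonneg_right hker.le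
  · rw [indicator_of_notMem hη, zero_add]
    calc _ ≤ C₂ * (subexpKernel s η * subexpKernel s (ξ - η)) * b :=
        mul_le_mul (hfar ξ η (hΓD ξ hξ η hη)) (hG η) hG' (by positivity)
      _ = C₂ * b * (subexpKernel s η * subexpKernel s (ξ - η)) := by ring
      _ ≤ _ := by gcongr; exact le_add_of_nonneg_left hC₁.le

theorem exists_isCone_memLp_of_eq_integral [SFinite μ] [SFinite ν] (hμ : TranslationBounded μ)
    (hν : TranslationBounded ν) (hs : 1 ≤ s) (hq : 1 ≤ q) (hω : IsSAdmissible s ω)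
    (hK : SubexpDecay s K) (hGm : Measurable G) {b : ℝ} (hGb : ∀ η, ‖G η‖ ≤ b)
    (hHm : Measurable H) {c : ℂ} (hH : ∀ ξ, H ξ = c * ∫ η, K (ξ - η) * G η ∂μ)
    (hΓo : IsOpen Γ) (hΓ : IsCone Γ) (hξ₀ : ξ₀ ∈ Γ)
    (hGΓ : MemLp (fun ξ => ‖G ξ‖ * ω ξ) (ENNReal.ofReal q) (μ.restrict Γ)) :
    ∃ Γ' : Set (𝔼 d), IsOpen Γ' ∧ IsCone Γ' ∧ ξ₀ ∈ Γ' ∧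
      MemLp (fun ξ => ‖H ξ‖ * ω ξ) (ENNReal.ofReal q) (ν.restrict Γ') := by
  have hs₀ : 0 < s := by linarith
  obtain ⟨Γ', hΓ'o, hΓ', hξ₀', A, hA, hbound⟩ :=
    exists_isCone_norm_mul_le_conicMajorant hs₀ hω hK hGb hΓo hΓ hξ₀
  refine ⟨Γ', hΓ'o, hΓ', hξ₀', memLp_of_enorm_le_lintegral_subexpKernel hμ (hν.restrict Γ') hs hq
    (measurable_conicMajorant hs₀ hω hΓo.measurableSet hGm)
    (memLp_conicMajorant hμ hs hq hΓo.measurableSet hGΓ)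
    (hHm.norm.mul hω.1).aestronglyMeasurable (A := ‖c‖ₑ * ENNReal.ofReal A) (by finiteness) ?_⟩
  refine ae_restrict_of_forall_mem hΓ'o.measurableSet fun ξ hξ => ?_
  calc ‖‖H ξ‖ * ω ξ‖ₑ = ‖c‖ₑ * (‖ω ξ‖ₑ * ‖∫ η, K (ξ - η) * G η ∂μ‖ₑ) := by
        rw [enorm_mul, enorm_norm, hH, enorm_mul]
        ring
    _ ≤ ‖c‖ₑ * (‖ω ξ‖ₑ * ∫⁻ η, ‖K (ξ - η) * G η‖ₑ ∂μ) := by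
        gcongr
        exact enorm_integral_le_lintegral_enorm _
    _ = ‖c‖ₑ * ∫⁻ η, ‖ω ξ * ‖K (ξ - η) * G η‖‖ₑ ∂μ := by
        simp only [enorm_mul, enorm_norm, lintegral_const_mul' _ _ enorm_ne_top]
    _ ≤ ‖c‖ₑ * ∫⁻ η, ENNReal.ofReal A * (‖conicMajorant s ω Γ G η‖ₑ *
          ENNReal.ofReal (subexpKernel s (ξ - η))) ∂μ := by
        gcongr with η
        rw [Real.enorm_of_nonneg (mul_nonneg (hω.2.1 ξ).le (norm_nonneg _)),
          Real.enorm_of_nonneg (conicMajorant_nonneg hω η),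
          ← ENNReal.ofReal_mul (conicMajorant_nonneg hω η), ← ENNReal.ofReal_mul hA]
        exact ENNReal.ofReal_le_ofReal (hbound ξ hξ η)
    _ = _ := by rw [lintegral_const_mul' _ _ ENNReal.ofReal_ne_top, mul_assoc]

end Transfer

section FourierTransform

open scoped FourierTransform

/-- The plane wave `x ↦ e^{-i⟨x, ξ⟩}`, the integral kernel of `FT`. -/
def planeWave (ξ x : 𝔼 d) : ℂ :=
  Complex.exp (-(⟪x, ξ⟫ : ℝ) * Complex.I)

/-- The normalizing constant `(2π)^{-d/2}` of `FT`. -/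
def fourierConst (d : ℕ) : ℝ :=
  (2 * Real.pi) ^ (-(d : ℝ) / 2)

theorem fourierConst_pos (d : ℕ) : 0 < fourierConst d := by
  unfold fourierConst
  positivity

theorem ofReal_fourierConst_ne_zero (d : ℕ) : (fourierConst d : ℂ) ≠ 0 :=
  Complex.ofReal_ne_zero.2 (fourierConst_pos d).ne'

theorem norm_planeWave (ξ x : 𝔼 d) : ‖planeWave ξ x‖ = 1 := by
  rw [planeWave, ← Complex.ofReal_neg, Complex.norm_exp_ofReal_mul_I]

theorem planeWave_add (ξ η x : 𝔼 d) : planeWave (ξ + η) x = planeWave ξ x * planeWave η x := by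
  simp only [planeWave, ← Complex.exp_add, inner_add_right]
  push_cast
  ring_nf

theorem planeWave_zero (x : 𝔼 d) : planeWave 0 x = 1 := by
  simp [planeWave]

theorem planeWave_add_right (ξ x y : 𝔼 d) :
    planeWave ξ (x + y) = planeWave ξ x * planeWave ξ y := by
  simp only [planeWave, ← Complex.exp_add, inner_add_left]
  push_cast
  ring_nf

theorem continuous_planeWave : Continuous fun p : 𝔼 d × 𝔼 d => planeWave p.1 p.2 := by
  unfold planeWave
  fun_prop

variable {f g φ : 𝔼 d → ℂ}

theorem FT_eq_fourierConst_mul_integral (f : 𝔼 d → ℂ) (ξ : 𝔼 d) :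
    FT f ξ = fourierConst d * ∫ x, f x * planeWave ξ x :=
  rfl

theorem norm_FT_le (f : 𝔼 d → ℂ) (ξ : 𝔼 d) : ‖FT f ξ‖ ≤ fourierConst d * ∫ x, ‖f x‖ := by
  rw [FT_eq_fourierConst_mul_integral, norm_mul, Complex.norm_real,
    Real.norm_of_nonneg (fourierConst_pos d).le]
  have := (fourierConst_pos d).le
  gcongr
  refine (norm_integral_le_integral_norm _).trans_eq ?_
  simp only [norm_mul, norm_planeWave, mul_one]

theorem FT_mul_planeWave (f : 𝔼 d → ℂ) (ξ η : 𝔼 d) :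
    FT (fun x => f x * planeWave ξ x) η = FT f (ξ + η) := by
  simp only [FT_eq_fourierConst_mul_integral, planeWave_add, mul_assoc]

theorem FT_eq_fourier (f : 𝔼 d → ℂ) (ξ : 𝔼 d) :
    FT f ξ = fourierConst d * 𝓕 f ((2 * Real.pi)⁻¹ • ξ) := by
  rw [FT_eq_fourierConst_mul_integral, Real.fourier_eq']
  congr 2 with x
  have hpi : (Real.pi : ℂ) ≠ 0 := Complex.ofReal_ne_zero.2 Real.pi_ne_zero
  rw [smul_eq_mul, mul_comm, planeWave, inner_smul_right]
  congr 2
  push_cast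
  field_simp

theorem continuous_FT (hf : Integrable f) : Continuous (FT f) := by
  have hcont : Continuous (𝓕 f) := VectorFourier.fourierIntegral_continuous
    Real.continuous_fourierChar (by exact continuous_inner) hf
  rw [funext (FT_eq_fourier f)]
  exact continuous_const.mul (hcont.comp (continuous_const_smul _))

theorem exists_eq_mul_integral_FT_mul_planeWave (hφc : Continuous φ) (hφ : Integrable φ)
    (hFφ : Integrable (FT φ)) :
    ∃ c : ℂ, ∀ x, φ x = c * ∫ η, FT φ η * planeWave (-η) x := by
  have hc := ofReal_fourierConst_ne_zero d
  have hpi : (2 * Real.pi) ≠ 0 := by positivity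
  have hfourier : 𝓕 φ = fun w => (fourierConst d : ℂ)⁻¹ * FT φ ((2 * Real.pi) • w) := by
    funext w
    rw [FT_eq_fourier, smul_smul, inv_mul_cancel₀ hpi, one_smul, inv_mul_cancel_left₀ hc]
  have hint : Integrable (𝓕 φ) := by
    rw [hfourier]
    exact ((integrable_comp_smul_iff volume (FT φ) hpi).2 hFφ).const_mul _
  refine ⟨(fourierConst d : ℂ)⁻¹ * (|((2 * Real.pi) ^ Module.finrank ℝ (𝔼 d))⁻¹| : ℝ), fun x => ?_⟩
  conv_lhs => rw [← hφc.fourierInv_fourier_eq hφ hint]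
  rw [Real.fourierInv_eq', mul_assoc, ← Complex.real_smul, ← Measure.integral_comp_smul volume
    (fun η => FT φ η * planeWave (-η) x), ← integral_const_mul]
  congr 1 with w
  rw [hfourier, planeWave, smul_eq_mul, mul_comm, mul_assoc, inner_neg_right, inner_smul_right,
    real_inner_comm]
  push_cast
  rw [neg_neg]

theorem FT_mul_eq_integral_of_planeWave_expansion {μ : Measure (𝔼 d)} [SFinite μ]
    (hg : Integrable g) {K : 𝔼 d → ℂ} (hK : Integrable K μ) {c : ℂ} {ξ : 𝔼 d}
    (hφ : ∀ x ∈ Function.support g, φ x * planeWave ξ x = c * ∫ η, K η * planeWave η x ∂μ) :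
    FT (fun x => φ x * g x) ξ = c * ∫ η, K η * FT g η ∂μ := by
  have hpoint (x : 𝔼 d) : φ x * g x * planeWave ξ x =
      c * ∫ η, K η * (g x * planeWave η x) ∂μ := by
    by_cases hx : g x = 0
    · simp [hx]
    · rw [mul_right_comm, hφ x hx, mul_assoc, ← integral_mul_const]
      simp only [mul_assoc, mul_comm (g x)]
  have hprod : Integrable (fun p : 𝔼 d × 𝔼 d => K p.2 * (g p.1 * planeWave p.2 p.1))
      (volume.prod μ) := by
    have hpw : Continuous fun p : 𝔼 d × 𝔼 d => planeWave p.2 p.1 :=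
      continuous_planeWave.comp continuous_swap
    have h := (hg.mul_prod hK).mul_bdd (c := 1) hpw.aestronglyMeasurable
      (ae_of_all _ fun p => (norm_planeWave p.2 p.1).le)
    refine h.congr (ae_of_all _ fun p => ?_)
    dsimp only
    rw [mul_right_comm, mul_comm]
  calc FT (fun x => φ x * g x) ξ
      = fourierConst d * ∫ x, c * ∫ η, K η * (g x * planeWave η x) ∂μ := by
        rw [FT_eq_fourierConst_mul_integral]
        exact congrArg _ (integral_congr_ae (ae_of_all _ hpoint))
    _ = c * (fourierConst d * ∫ η, ∫ x, K η * (g x * planeWave η x) ∂volume ∂μ) := by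
        rw [integral_const_mul, mul_left_comm]
        exact congrArg _ (congrArg _ (integral_integral_swap hprod))
    _ = c * ∫ η, K η * FT g η ∂μ := by
        simp only [FT_eq_fourierConst_mul_integral, integral_const_mul,
          mul_left_comm (K _) (fourierConst d : ℂ)]

end FourierTransform

section SubexpDecay

variable {E : Type*} [NormedAddCommGroup E] [NormedSpace ℝ E] [FiniteDimensional ℝ E]
  [MeasurableSpace E] [BorelSpace E] {μ : Measure E} [SFinite μ] {s : ℝ} {K G H : E → ℂ}

theorem SubexpDecay.integrable_comp_sub (hK : SubexpDecay s K) (hKc : Continuous K)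
    (hμ : TranslationBounded μ) (hs : 1 ≤ s) (ξ : E) : Integrable (fun η => K (ξ - η)) μ := by
  obtain ⟨C, hC⟩ := hK.exists_norm_le_mul_subexpKernel
  exact ((hμ.integrable_subexpKernel_sub hs ξ).const_mul C).mono'
    (hKc.comp (continuous_const.sub continuous_id)).aestronglyMeasurable
    (ae_of_all _ fun η => hC (ξ - η))

theorem SubexpDecay.of_eq_integral (hK : SubexpDecay s K) (hG : SubexpDecay s G)
    (hμ : TranslationBounded μ) (hs : 1 ≤ s) {c : ℂ}
    (hH : ∀ ξ, H ξ = c * ∫ η, K (ξ - η) * G η ∂μ) : SubexpDecay s H := by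
  intro N hN
  obtain ⟨C₁, hC₁, hK⟩ := hK N hN
  obtain ⟨C₂, hC₂, hG⟩ := hG (N + 1) (by linarith)
  have hpoint (ξ η : E) : ‖K (ξ - η) * G η‖ ≤
      C₁ * C₂ * Real.exp (-N * ‖ξ‖ ^ (1 / s)) * subexpKernel s (0 - η) := by
    have hadd : ‖ξ‖ ^ (1 / s) ≤ ‖ξ - η‖ ^ (1 / s) + ‖η‖ ^ (1 / s) := by
      simpa using norm_add_rpow_one_div_le hs (ξ - η) η
    calc ‖K (ξ - η) * G η‖
        ≤ C₁ * Real.exp (-N * ‖ξ - η‖ ^ (1 / s)) * (C₂ * Real.exp (-(N + 1) * ‖η‖ ^ (1 / s))) := by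
          rw [norm_mul]
          gcongr
          exacts [hK _, hG _]
      _ = C₁ * C₂ * (Real.exp (-N * (‖ξ - η‖ ^ (1 / s) + ‖η‖ ^ (1 / s))) *
          subexpKernel s (0 - η)) := by
          rw [mul_mul_mul_comm, zero_sub, subexpKernel_neg, subexpKernel, ← Real.exp_add,
            ← Real.exp_add]
          ring_nf
      _ ≤ _ := by
          rw [← mul_assoc]
          have := (subexpKernel_pos s (0 - η)).le
          gcongr C₁ * C₂ * Real.exp ?_ * _
          exact mul_le_mul_of_nonpos_left hadd (by linarith)
  let I : ℝ := ∫ η, subexpKernel s (0 - η) ∂μ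
  have hI : 0 ≤ I := integral_nonneg fun η => (subexpKernel_pos s _).le
  refine ⟨‖c‖ * (C₁ * C₂ * I) + 1, by positivity, fun ξ => ?_⟩
  have hint := norm_integral_le_of_norm_le
    ((hμ.integrable_subexpKernel_sub hs 0).const_mul _) (ae_of_all _ (hpoint ξ))
  calc ‖H ξ‖ ≤ ‖c‖ * (C₁ * C₂ * Real.exp (-N * ‖ξ‖ ^ (1 / s)) * I) := by
        rw [hH, norm_mul]
        gcongr
        rwa [integral_const_mul] at hint
    _ = ‖c‖ * (C₁ * C₂ * I) * Real.exp (-N * ‖ξ‖ ^ (1 / s)) := by ring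
    _ ≤ _ := by
        gcongr
        exact le_add_of_nonneg_right zero_le_one

end SubexpDecay

section Cutoff

variable {s : ℝ} {φ ψ f g : 𝔼 d → ℂ}

theorem IsSCutoff.subexpDecay_FT (hφ : IsSCutoff s φ) : SubexpDecay s (FT φ) :=
  hφ.2.2

theorem IsSCutoff.integrable (hφ : IsSCutoff s φ) : Integrable φ :=
  hφ.1.continuous.integrable_of_hasCompactSupport hφ.2.1

theorem IsSCutoff.integrable_mul (hφ : IsSCutoff s φ) (hf : LocallyIntegrable f) :
    Integrable fun x => φ x * f x :=
  hf.integrable_smul_left_of_hasCompactSupport hφ.1.continuous hφ.2.1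

theorem IsSCutoff.integrable_FT_sub (hφ : IsSCutoff s φ) {μ : Measure (𝔼 d)} [SFinite μ]
    (hμ : TranslationBounded μ) (hs : 1 ≤ s) (ξ : 𝔼 d) : Integrable (fun η => FT φ (ξ - η)) μ :=
  hφ.subexpDecay_FT.integrable_comp_sub (continuous_FT hφ.integrable) hμ hs ξ

theorem IsSCutoff.integrable_FT (hφ : IsSCutoff s φ) (hs : 1 ≤ s) : Integrable (FT φ) := by
  have h := hφ.integrable_FT_sub (translationBounded_of_isAddHaarMeasure volume) hs 0
  simpa using h.comp_neg

theorem IsSCutoff.exists_FT_mul_eq_integral (hφ : IsSCutoff s φ) (hs : 1 ≤ s)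
    (hg : Integrable g) :
    ∃ c : ℂ, ∀ ξ, FT (fun x => φ x * g x) ξ = c * ∫ η, FT φ (ξ - η) * FT g η := by
  obtain ⟨c, hc⟩ := exists_eq_mul_integral_FT_mul_planeWave hφ.1.continuous hφ.integrable
    (hφ.integrable_FT hs)
  refine ⟨c, fun ξ => FT_mul_eq_integral_of_planeWave_expansion hg
    (hφ.integrable_FT_sub (translationBounded_of_isAddHaarMeasure volume) hs ξ) fun x _ => ?_⟩
  rw [hc, mul_assoc, ← integral_mul_const,
    ← integral_sub_left_eq_self (fun η => FT φ η * planeWave (-η) x * planeWave ξ x) volume ξ]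
  simp only [mul_assoc, ← planeWave_add, neg_sub, sub_add_cancel]

theorem IsSCutoff.mul (hφ : IsSCutoff s φ) (hψ : IsSCutoff s ψ) (hs : 1 ≤ s) :
    IsSCutoff s fun x => φ x * ψ x :=
  let ⟨_, hc⟩ := hφ.exists_FT_mul_eq_integral hs hψ.integrable
  ⟨hφ.1.mul hψ.1, hφ.2.1.mul_right, hφ.subexpDecay_FT.of_eq_integral hψ.subexpDecay_FT
    (translationBounded_of_isAddHaarMeasure volume) hs hc⟩

end Cutoff

section UnitTorus

variable {ι : Type*}

theorem continuous_comp_equivIoc_of_tsupport_subset {Y : Type*} [TopologicalSpace Y] [Zero Y]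
    {w : (ι → ℝ) → Y} (hw : Continuous w)
    (hsupp : tsupport w ⊆ univ.pi fun _ => Ioo 0 1) :
    Continuous fun θ : UnitAddTorus ι => w fun i => (AddCircle.equivIoc (1 : ℝ) 0 (θ i)).1 := by
  let π : (ι → ℝ) → UnitAddTorus ι := fun t i => (t i : UnitAddCircle)
  have hπ : Continuous π :=
    continuous_pi fun i => (AddCircle.continuous_mk' 1).comp (continuous_apply i)
  have hcompact : IsCompact (tsupport w) :=
    (isCompact_univ_pi fun _ => isCompact_Icc).of_isClosed_subset (isClosed_tsupport w)
      (hsupp.trans (pi_mono fun _ _ => Ioo_subset_Icc_self))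
  let rep : UnitAddTorus ι → ι → ℝ := fun θ i => (AddCircle.equivIoc (1 : ℝ) 0 (θ i)).1
  have hsub : tsupport (w ∘ rep) ⊆ π '' tsupport w :=
    closure_minimal (fun θ hθ => ⟨rep θ, subset_tsupport w hθ, funext fun _ =>
      AddCircle.coe_equivIoc⟩) (hcompact.image hπ).isClosed
  refine continuous_of_tsupport (f := w ∘ rep) fun θ hθ => ?_
  obtain ⟨t, ht, rfl⟩ := hsub hθ
  have hne (i : ι) : π t i ≠ ((0 : ℝ) : UnitAddCircle) := by
    have hti := hsupp ht i (mem_univ i)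
    rw [AddCircle.coe_zero, Ne, AddCircle.coe_eq_zero_iff_of_mem_Ico (Ioo_subset_Ico_self hti)]
    exact hti.1.ne'
  refine hw.continuousAt.comp (continuousAt_pi.2 fun i => ?_)
  exact (continuous_subtype_val.continuousAt.comp
    (AddCircle.continuousAt_equivIoc (1 : ℝ) 0 (hne i))).comp
      (f := fun θ : UnitAddTorus ι => θ i) (continuous_apply i).continuousAt

variable [Fintype ι]

theorem mFourier_coe (k : ι → ℤ) (t : ι → ℝ) :
    UnitAddTorus.mFourier k (fun i => (t i : UnitAddCircle)) =
      Complex.exp ((2 * Real.pi * ∑ i, t i * k i : ℝ) * Complex.I) := by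
  simp only [UnitAddTorus.mFourier, ContinuousMap.coe_mk, fourier_coe_apply, ← Complex.exp_sum]
  push_cast
  rw [Finset.mul_sum, Finset.sum_mul]
  refine congrArg _ (Finset.sum_congr rfl fun i _ => ?_)
  ring

theorem hasSum_fourierSeries_of_tsupport_subset {w : (ι → ℝ) → ℂ} (hw : Continuous w)
    (hsupp : tsupport w ⊆ univ.pi fun _ => Ioo 0 1) {c : (ι → ℤ) → ℂ}
    (hc : ∀ k, c k = ∫ t, w t * Complex.exp (-(2 * Real.pi * ∑ i, t i * k i : ℝ) * Complex.I))
    (hsum : Summable c) {t : ι → ℝ} (ht : t ∈ univ.pi fun _ => Ioo (0 : ℝ) 1) :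
    HasSum (fun k => c k * Complex.exp ((2 * Real.pi * ∑ i, t i * k i : ℝ) * Complex.I))
      (w t) := by
  let W : C(UnitAddTorus ι, ℂ) := ⟨_, continuous_comp_equivIoc_of_tsupport_subset hw hsupp⟩
  let cube : Set (ι → ℝ) := {t | ∀ i, t i ∈ Ioc (0 : ℝ) (0 + 1)}
  have hbox : (univ.pi fun _ => Ioo 0 1) ⊆ cube := fun t ht i => by
    simpa using Ioo_subset_Ioc_self (ht i (mem_univ i))
  have hcube : MeasurableSet {t : ι → ℝ | ∀ i, t i ∈ Ioc (0 : ℝ) (0 + 1)} := by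
    rw [ofPred_forall]
    exact .iInter fun i => measurableSet_Ioc.preimage (measurable_pi_apply i)
  have hW (t : ι → ℝ) (ht : t ∈ cube) : W (fun i => (t i : UnitAddCircle)) = w t :=
    congrArg w (funext fun i => by rw [AddCircle.equivIoc_coe_eq (ht i)])
  have hcoeff : UnitAddTorus.mFourierCoeff W = c := by
    funext k
    rw [UnitAddTorus.mFourierCoeff_eq_integral _ _ fun _ => 0, hc]
    refine Eq.trans ?_
      (setIntegral_eq_integral_of_forall_compl_eq_zero (s := cube) fun t ht => ?_)
    · refine setIntegral_congr_fun hcube fun t ht => ?_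
      simp only [smul_eq_mul, hW t ht, mFourier_coe, Pi.neg_apply, Int.cast_neg, mul_neg,
        Finset.sum_neg_distrib, Complex.ofReal_neg, mul_comm (w t)]
    · rw [image_eq_zero_of_notMem_tsupport fun h => ht (hbox (hsupp h)), zero_mul]
  have := UnitAddTorus.hasSum_mFourier_series_apply_of_summable (f := W) (hcoeff ▸ hsum)
    fun i => (t i : UnitAddCircle)
  rw [hcoeff, hW t (hbox ht)] at this
  simpa only [smul_eq_mul, mFourier_coe] using this

end UnitTorus

section Sampling

theorem exists_integral_comp_continuousLinearEquiv {E F : Type*} [NormedAddCommGroup E]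
    [NormedSpace ℝ E] [MeasurableSpace E] [BorelSpace E] [NormedAddCommGroup F] [NormedSpace ℝ F]
    [FiniteDimensional ℝ F] [MeasurableSpace F] [BorelSpace F] (μ : Measure E) [μ.IsAddHaarMeasure]
    (ν : Measure F) [ν.IsAddHaarMeasure] (L : E ≃L[ℝ] F) :
    ∃ a : ℝ, ∀ g : F → ℂ, ∫ t, g (L t) ∂μ = a * ∫ x, g x ∂ν := by
  have : (μ.map L).IsAddHaarMeasure := L.isAddHaarMeasure_map μ
  refine ⟨(μ.map L).addHaarScalarFactor ν, fun g => ?_⟩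
  calc ∫ t, g (L t) ∂μ = ∫ x, g x ∂μ.map L :=
        (L.toHomeomorph.measurableEmbedding.integral_map g).symm
    _ = (μ.map L).addHaarScalarFactor ν • ∫ x, g x ∂ν := by
        rw [← integral_smul_nnreal_measure, ← Measure.isAddLeftInvariant_eq_smul]
    _ = _ := Complex.real_smul

variable {L M : (Fin d → ℝ) ≃L[ℝ] 𝔼 d} {x₁ : 𝔼 d} {φ ψ g : 𝔼 d → ℂ} {s : ℝ}

/-- The open parallelepiped `x₁ + L((0,1)^d)`. -/
def openBox (L : (Fin d → ℝ) ≃L[ℝ] 𝔼 d) (x₁ : 𝔼 d) : Set (𝔼 d) :=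
  (fun t => x₁ + L t) '' univ.pi fun _ => Ioo 0 1

/-- Duality of the lattices `L(ℤ^d)` and `M(ℤ^d)`, with the factor `2π` that makes
`x ↦ e^{-i⟨x, M k⟩}` periodic with respect to `L(ℤ^d)`. -/
def IsDualPair (L M : (Fin d → ℝ) ≃L[ℝ] 𝔼 d) : Prop :=
  ∀ t u, (⟪L t, M u⟫ : ℝ) = 2 * Real.pi * ∑ i, t i * u i

theorem IsDualPair.planeWave_apply (hLM : IsDualPair L M) (k : Fin d → ℤ) (t : Fin d → ℝ) :
    planeWave (M fun i => (k i : ℝ)) (L t) =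
      Complex.exp (-(2 * Real.pi * ∑ i, t i * k i : ℝ) * Complex.I) := by
  rw [planeWave, hLM]

theorem IsDualPair.exists_coeff_eq_FT (hLM : IsDualPair L M) :
    ∃ a : ℂ, ∀ (x₁ : 𝔼 d) (ψ : 𝔼 d → ℂ) (k : Fin d → ℤ),
      ∫ t, ψ (x₁ + L t) * Complex.exp (-(2 * Real.pi * ∑ i, t i * k i : ℝ) * Complex.I) =
        a * (FT ψ (M fun i => (k i : ℝ)) * planeWave (-M fun i => (k i : ℝ)) x₁) := by
  obtain ⟨a, ha⟩ := exists_integral_comp_continuousLinearEquiv volume volume L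
  refine ⟨a * (fourierConst d : ℂ)⁻¹, fun x₁ ψ k => ?_⟩
  set ξ := M fun i => (k i : ℝ)
  have hpw (t : Fin d → ℝ) : ψ (x₁ + L t) *
      Complex.exp (-(2 * Real.pi * ∑ i, t i * k i : ℝ) * Complex.I) =
        ψ (x₁ + L t) * planeWave ξ (x₁ + L t) * planeWave (-ξ) x₁ := by
    rw [← hLM.planeWave_apply, planeWave_add_right, mul_assoc, mul_right_comm, ← planeWave_add,
      add_neg_cancel, planeWave_zero, one_mul]
  rw [integral_congr_ae (ae_of_all _ hpw), integral_mul_const,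
    ha fun x => ψ (x₁ + x) * planeWave ξ (x₁ + x),
    integral_add_left_eq_self (fun x => ψ x * planeWave ξ x) x₁, FT_eq_fourierConst_mul_integral]
  have := ofReal_fourierConst_ne_zero d
  field_simp

theorem tsupport_comp_subset_of_subset_openBox (hψ : tsupport ψ ⊆ openBox L x₁) :
    tsupport (fun t => ψ (x₁ + L t)) ⊆ univ.pi fun _ => Ioo 0 1 := by
  intro t ht
  have hmem : x₁ + L t ∈ tsupport ψ :=
    tsupport_comp_subset_preimage ψ (continuous_const.add L.continuous) ht
  obtain ⟨u, hu, hut⟩ := hψ hmem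
  rwa [← L.injective (add_left_cancel hut)]

theorem IsDualPair.exists_hasSum_FT_mul_planeWave (hLM : IsDualPair L M) :
    ∃ a : ℂ, ∀ {x₁ : 𝔼 d} {ψ : 𝔼 d → ℂ}, Continuous ψ → tsupport ψ ⊆ openBox L x₁ →
      (Summable fun k : Fin d → ℤ => FT ψ (M fun i => (k i : ℝ))) → ∀ x ∈ openBox L x₁,
        HasSum (fun k : Fin d → ℤ =>
          a * (FT ψ (M fun i => (k i : ℝ)) * planeWave (-M fun i => (k i : ℝ)) x)) (ψ x) := by
  obtain ⟨a, ha⟩ := hLM.exists_coeff_eq_FT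
  refine ⟨a, ?_⟩
  rintro x₁ ψ hψ hsupp hsum _ ⟨t, ht, rfl⟩
  have hsum' : Summable fun k : Fin d → ℤ =>
      a * (FT ψ (M fun i => (k i : ℝ)) * planeWave (-M fun i => (k i : ℝ)) x₁) := by
    refine .mul_left a (.of_norm ?_)
    simpa only [norm_mul, norm_planeWave, mul_one] using hsum.norm
  have hcont : Continuous fun t => ψ (x₁ + L t) := hψ.comp (continuous_const.add L.continuous)
  have hseries := hasSum_fourierSeries_of_tsupport_subset hcont
    (tsupport_comp_subset_of_subset_openBox hsupp) (fun k => (ha x₁ ψ k).symm) hsum' ht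
  have hchar (k : Fin d → ℤ) : Complex.exp ((2 * Real.pi * ∑ i, t i * k i : ℝ) * Complex.I) =
      planeWave (-M fun i => (k i : ℝ)) (L t) := by
    rw [planeWave, inner_neg_right, hLM, Complex.ofReal_neg, neg_neg]
  simp only [hchar] at hseries
  simpa only [planeWave_add_right, mul_assoc] using hseries

theorem IsDualPair.exists_eq_mul_integral_latticeMeasure (hLM : IsDualPair L M) :
    ∃ c : ℂ, ∀ {x₁ : 𝔼 d} {ψ : 𝔼 d → ℂ}, Continuous ψ → tsupport ψ ⊆ openBox L x₁ →
      Integrable (fun η => FT ψ (-η)) (latticeMeasure M) → ∀ x ∈ openBox L x₁,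
        ψ x = c * ∫ η, FT ψ (-η) * planeWave η x ∂latticeMeasure M := by
  obtain ⟨c, hc⟩ := hLM.exists_hasSum_FT_mul_planeWave
  refine ⟨c, fun {x₁ ψ} hψ hsupp hint x hx => ?_⟩
  have hneg (k : Fin d → ℤ) : (M fun i => ((-k) i : ℝ)) = -M fun i => (k i : ℝ) := by
    rw [← map_neg]
    exact congrArg M (funext fun i => Int.cast_neg _)
  have hsum : Summable fun k : Fin d → ℤ => FT ψ (M fun i => (k i : ℝ)) := by
    rw [← (Equiv.neg _).summable_iff]
    simpa only [Function.comp_def, Equiv.neg_apply, hneg] using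
      (hasSum_integral_latticeMeasure M hint).summable
  have hpw : Continuous fun η => planeWave η x :=
    continuous_planeWave.comp (continuous_id.prodMk continuous_const)
  have hint' := hint.mul_bdd (c := 1) hpw.aestronglyMeasurable
    (ae_of_all _ fun η => (norm_planeWave η x).le)
  have hseries := (Equiv.neg _).hasSum_iff.2 (hc hψ hsupp hsum x hx)
  simp only [Function.comp_def, Equiv.neg_apply, hneg, neg_neg] at hseries
  exact hseries.unique ((hasSum_integral_latticeMeasure M hint').mul_left c)

theorem IsSCutoff.exists_FT_mul_eq_integral_latticeMeasure (hφ : IsSCutoff s φ) (hs : 1 ≤ s)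
    (hLM : IsDualPair L M) (hφL : tsupport φ ⊆ openBox L x₁) (hg : Integrable g)
    (hgL : Function.support g ⊆ openBox L x₁) :
    ∃ c : ℂ, ∀ ξ, FT (fun x => φ x * g x) ξ =
      c * ∫ η, FT φ (ξ - η) * FT g η ∂latticeMeasure M := by
  obtain ⟨c, hc⟩ := hLM.exists_eq_mul_integral_latticeMeasure
  refine ⟨c, fun ξ => ?_⟩
  have hint := hφ.integrable_FT_sub (translationBounded_latticeMeasure M) hs ξ
  refine FT_mul_eq_integral_of_planeWave_expansion hg hint fun x hx => ?_
  have hcont : Continuous fun x => φ x * planeWave ξ x :=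
    hφ.1.continuous.mul (continuous_planeWave.comp (continuous_const.prodMk continuous_id))
  have hFT (η : 𝔼 d) : FT (fun x => φ x * planeWave ξ x) (-η) = FT φ (ξ - η) := by
    rw [FT_mul_planeWave, sub_eq_add_neg]
  have hexp := hc hcont (tsupport_mul_subset_left.trans hφL)
    (by simpa only [hFT] using hint) x (hgL hx)
  simpa only [hFT] using hexp

end Sampling

section Matrices

variable {A : Matrix (Fin d) (Fin d) ℝ} {x₁ : 𝔼 d} {c : ℝ}

/-- An invertible matrix as a linear isomorphism from coordinates onto Euclidean space. -/
def matrixCLE (A : Matrix (Fin d) (Fin d) ℝ) (hA : IsUnit A.det) : (Fin d → ℝ) ≃L[ℝ] 𝔼 d :=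
  have hA' := (Matrix.isUnit_iff_isUnit_det A).2 hA
  (LinearEquiv.ofBijective A.mulVecLin ⟨Matrix.mulVec_injective_iff_isUnit.2 hA',
    Matrix.mulVec_surjective_iff_isUnit.2 hA'⟩).toContinuousLinearEquiv.trans
      (EuclideanSpace.equiv (Fin d) ℝ).symm

theorem matrixCLE_apply (hA : IsUnit A.det) (t : Fin d → ℝ) :
    matrixCLE A hA t = toE (A.mulVec t) :=
  rfl

theorem interior_lattPara (hA : IsUnit A.det) :
    interior (lattPara A x₁) = openBox (matrixCLE A hA) x₁ := by
  let T : (Fin d → ℝ) ≃ₜ 𝔼 d := (matrixCLE A hA).toHomeomorph.trans (Homeomorph.addLeft x₁)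
  have hpara : lattPara A x₁ = T '' univ.pi fun _ => Icc 0 1 := rfl
  rw [hpara, ← T.image_interior, interior_pi_set finite_univ]
  simp only [interior_Icc]
  rfl

theorem isUnit_det_smul {r : ℝ} (hr : r ≠ 0) (hA : IsUnit A.det) : IsUnit (r • A).det := by
  rw [Matrix.det_smul]
  exact (hr.isUnit.pow _).mul hA

/-- The isomorphism `t ↦ c (Aᵀ)⁻¹ t`, which carries `ℤ^d` onto the dual lattice `c (Aᵀ)⁻¹(ℤ^d)`. -/
def dualCLE (A : Matrix (Fin d) (Fin d) ℝ) (hA : IsUnit A.det) (hc : c ≠ 0) :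
    (Fin d → ℝ) ≃L[ℝ] 𝔼 d :=
  matrixCLE (c • A.transpose⁻¹) <| isUnit_det_smul hc <|
    Matrix.isUnit_nonsing_inv_det _ (Matrix.isUnit_det_transpose A hA)

theorem dualCLE_apply (hA : IsUnit A.det) (hc : c ≠ 0) (t : Fin d → ℝ) :
    dualCLE A hA hc t = toE (c • A.transpose⁻¹.mulVec t) := by
  rw [dualCLE, matrixCLE_apply, Matrix.smul_mulVec]

theorem inner_toE (a b : Fin d → ℝ) : (⟪toE a, toE b⟫ : ℝ) = a ⬝ᵥ b := by
  rw [dotProduct_comm]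
  rfl

theorem isDualPair_dualCLE (hA : IsUnit A.det) (hc : c ≠ 0)
    (hA' : IsUnit ((2 * Real.pi / c) • A).det) :
    IsDualPair (matrixCLE ((2 * Real.pi / c) • A) hA') (dualCLE A hA hc) := by
  intro t u
  have hinv : A.mulVec t ⬝ᵥ A.transpose⁻¹.mulVec u = t ⬝ᵥ u := by
    rw [dotProduct_comm, Matrix.dotProduct_mulVec, ← Matrix.mulVec_transpose,
      Matrix.mulVec_mulVec, Matrix.mul_nonsing_inv _ (Matrix.isUnit_det_transpose A hA),
      Matrix.one_mulVec, dotProduct_comm]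
  rw [matrixCLE_apply, dualCLE_apply, inner_toE, Matrix.smul_mulVec, smul_dotProduct,
    dotProduct_smul, hinv, smul_eq_mul, smul_eq_mul, ← mul_assoc, div_mul_cancel₀ _ hc, dotProduct]

theorem openBox_subset_openBox_smul {r : ℝ} (hr : 1 ≤ r) (hA : IsUnit A.det) :
    openBox (matrixCLE A hA) x₁ ⊆
      openBox (matrixCLE (r • A) (isUnit_det_smul (zero_lt_one.trans_le hr).ne' hA)) x₁ := by
  rintro _ ⟨t, ht, rfl⟩
  have hr₀ : 0 < r := zero_lt_one.trans_le hr
  refine ⟨r⁻¹ • t, fun i hi => ⟨mul_pos (inv_pos.2 hr₀) (ht i hi).1, ?_⟩, ?_⟩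
  · exact mul_lt_one_of_nonneg_of_lt_one_right (inv_le_one_of_one_le₀ hr) (ht i hi).1.le (ht i hi).2
  · simp only [matrixCLE_apply, Matrix.smul_mulVec, Matrix.mulVec_smul]
    rw [inv_smul_smul₀ hr₀.ne']

theorem ball_subset_lattPara {R : ℝ} (hR : 0 < R) :
    Metric.ball 0 R ⊆ lattPara ((2 * R) • (1 : Matrix (Fin d) (Fin d) ℝ)) (toE fun _ => -R) := by
  intro x hx
  have hxi (i : Fin d) : |x i| < R :=
    (PiLp.norm_apply_le x i).trans_lt (mem_ball_zero_iff.1 hx)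
  refine ⟨fun i => (x i + R) / (2 * R), fun i _ => ⟨?_, ?_⟩, ?_⟩
  · exact div_nonneg (by linarith [(abs_lt.1 (hxi i)).1]) (by positivity)
  · exact (div_le_one (by positivity)).2 (by linarith [(abs_lt.1 (hxi i)).2])
  · ext i
    simp only [Matrix.smul_mulVec, Matrix.one_mulVec]
    change -R + 2 * R * ((x i + R) / (2 * R)) = x i
    field_simp
    ring

theorem exists_subset_interior_lattPara {K : Set (𝔼 d)} (hK : Bornology.IsBounded K) :
    ∃ (A : Matrix (Fin d) (Fin d) ℝ) (x₁ : 𝔼 d), IsUnit A.det ∧ K ⊆ interior (lattPara A x₁) := by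
  obtain ⟨R, hR, hKR⟩ := hK.subset_ball_lt 0 0
  refine ⟨(2 * R) • 1, toE fun _ => -R, isUnit_det_smul (by positivity) (by simp), ?_⟩
  exact hKR.trans (interior_maximal (ball_subset_lattPara hR) Metric.isOpen_ball)

end Matrices

section WaveFrontSet

variable {s q : ℝ} {ω : 𝔼 d → ℝ} {f g φ : 𝔼 d → ℂ} {x₀ ξ₀ : 𝔼 d} {Γ : Set (𝔼 d)}

theorem measurable_norm_FT_mul (hω : IsSAdmissible s ω) (hg : Integrable g) :
    Measurable fun ξ => ‖FT g ξ‖ * ω ξ :=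
  (continuous_FT hg).norm.measurable.mul hω.1

theorem FLSemi_ne_top_iff (hω : IsSAdmissible s ω) (hg : Integrable g) {p : ℝ≥0∞} :
    FLSemi ω p g Γ ≠ ∞ ↔ MemLp (fun ξ => ‖FT g ξ‖ * ω ξ) p (volume.restrict Γ) :=
  lt_top_iff_ne_top.symm.trans
    (and_iff_right (measurable_norm_FT_mul hω hg).aestronglyMeasurable).symm

theorem summable_dualLatPt_iff (hω : IsSAdmissible s ω) (hg : Integrable g) (hq : 0 < q)
    {A : Matrix (Fin d) (Fin d) ℝ} (hA : IsUnit A.det) {c : ℝ} (hc : c ≠ 0)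
    (hΓ : MeasurableSet Γ) :
    (Summable fun k : Fin d → ℤ =>
        Γ.indicator (fun ξ => (‖FT g ξ‖ * ω ξ) ^ q) (dualLatPt A c k)) ↔
      MemLp (fun ξ => ‖FT g ξ‖ * ω ξ) (ENNReal.ofReal q)
        ((latticeMeasure (dualCLE A hA hc)).restrict Γ) := by
  rw [memLp_restrict_latticeMeasure_iff _ hq (measurable_norm_FT_mul hω hg)
    (fun ξ => mul_nonneg (norm_nonneg _) (hω.2.1 ξ).le) hΓ]
  simp only [dualCLE_apply, dualLatPt]

theorem notMem_WF_FL_iff (hξ₀ : ξ₀ ≠ 0) {p : ℝ≥0∞} :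
    (x₀, ξ₀) ∉ WF_FL s p ω f ↔ ∃ φ, IsSCutoff s φ ∧ φ x₀ ≠ 0 ∧ ∃ Γ, IsOpen Γ ∧ IsCone Γ ∧ ξ₀ ∈ Γ ∧
      FLSemi ω p (fun x => φ x * f x) Γ ≠ ∞ := by
  simp only [WF_FL, mem_ofPred_eq, not_and, not_forall, exists_prop, hξ₀, ne_eq, not_false_eq_true,
    forall_const]

theorem IsSCutoff.exists_isCone_memLp_FT_mul {μ ν : Measure (𝔼 d)} [SFinite μ] [SFinite ν]
    (hμ : TranslationBounded μ) (hν : TranslationBounded ν) (hs : 1 ≤ s) (hq : 1 ≤ q)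
    (hω : IsSAdmissible s ω) (hφ : IsSCutoff s φ) (hg : Integrable g) {c : ℂ}
    (hc : ∀ ξ, FT (fun x => φ x * g x) ξ = c * ∫ η, FT φ (ξ - η) * FT g η ∂μ)
    (hΓo : IsOpen Γ) (hΓ : IsCone Γ) (hξ₀ : ξ₀ ∈ Γ)
    (hgΓ : MemLp (fun ξ => ‖FT g ξ‖ * ω ξ) (ENNReal.ofReal q) (μ.restrict Γ)) :
    ∃ Γ' : Set (𝔼 d), IsOpen Γ' ∧ IsCone Γ' ∧ ξ₀ ∈ Γ' ∧
      MemLp (fun ξ => ‖FT (fun x => φ x * g x) ξ‖ * ω ξ) (ENNReal.ofReal q) (ν.restrict Γ') :=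
  have hφg : Integrable fun x => φ x * g x := hφ.integrable_mul hg.locallyIntegrable
  exists_isCone_memLp_of_eq_integral hμ hν hs hq hω hφ.subexpDecay_FT
    (continuous_FT hg).measurable (norm_FT_le g) (continuous_FT hφg).measurable hc hΓo hΓ hξ₀ hgΓ

theorem IsSCutoff.exists_isCone_summable_dualLatPt (hs : 1 ≤ s) (hq : 1 ≤ q)
    (hω : IsSAdmissible s ω) (hφ : IsSCutoff s φ) (hg : Integrable g) (hΓo : IsOpen Γ)
    (hΓ : IsCone Γ) (hξ₀ : ξ₀ ∈ Γ) (hgΓ : FLSemi ω (ENNReal.ofReal q) g Γ ≠ ∞)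
    {A : Matrix (Fin d) (Fin d) ℝ} (hA : IsUnit A.det) {c : ℝ} (hc : c ≠ 0) :
    ∃ Γ' : Set (𝔼 d), IsOpen Γ' ∧ IsCone Γ' ∧ ξ₀ ∈ Γ' ∧ Summable fun k : Fin d → ℤ =>
      Γ'.indicator (fun ξ => (‖FT (fun x => φ x * g x) ξ‖ * ω ξ) ^ q) (dualLatPt A c k) := by
  obtain ⟨a, ha⟩ := hφ.exists_FT_mul_eq_integral hs hg
  obtain ⟨Γ', hΓo', hΓ', hξ₀', h⟩ := hφ.exists_isCone_memLp_FT_mul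
    (translationBounded_of_isAddHaarMeasure volume)
    (translationBounded_latticeMeasure (dualCLE A hA hc)) hs hq hω hg ha hΓo hΓ hξ₀
    ((FLSemi_ne_top_iff hω hg).1 hgΓ)
  have hφg := hφ.integrable_mul hg.locallyIntegrable
  exact ⟨Γ', hΓo', hΓ', hξ₀', (summable_dualLatPt_iff hω hφg (zero_lt_one.trans_le hq) hA hc
    hΓo'.measurableSet).2 h⟩

theorem IsSCutoff.exists_isCone_FLSemi_ne_top (hs : 1 ≤ s) (hq : 1 ≤ q)
    (hω : IsSAdmissible s ω) (hφ : IsSCutoff s φ) (hg : Integrable g) (hΓo : IsOpen Γ)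
    (hΓ : IsCone Γ) (hξ₀ : ξ₀ ∈ Γ) {A : Matrix (Fin d) (Fin d) ℝ} (hA : IsUnit A.det) {c : ℝ}
    (hc₀ : 0 < c) (hc : c ≤ 2 * Real.pi) {x₁ : 𝔼 d} (hφA : tsupport φ ⊆ interior (lattPara A x₁))
    (hgA : Function.support g ⊆ interior (lattPara A x₁))
    (hgΓ : Summable fun k : Fin d → ℤ =>
      Γ.indicator (fun ξ => (‖FT g ξ‖ * ω ξ) ^ q) (dualLatPt A c k)) :
    ∃ Γ' : Set (𝔼 d), IsOpen Γ' ∧ IsCone Γ' ∧ ξ₀ ∈ Γ' ∧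
      FLSemi ω (ENNReal.ofReal q) (fun x => φ x * g x) Γ' ≠ ∞ := by
  have hbox := openBox_subset_openBox_smul (x₁ := x₁) ((one_le_div₀ hc₀).2 hc) hA
  rw [← interior_lattPara] at hbox
  obtain ⟨a, ha⟩ := hφ.exists_FT_mul_eq_integral_latticeMeasure hs
    (isDualPair_dualCLE hA hc₀.ne' _) (hφA.trans hbox) hg (hgA.trans hbox)
  obtain ⟨Γ', hΓo', hΓ', hξ₀', h⟩ := hφ.exists_isCone_memLp_FT_mul
    (translationBounded_latticeMeasure (dualCLE A hA hc₀.ne'))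
    (translationBounded_of_isAddHaarMeasure volume) hs hq hω hg ha hΓo hΓ hξ₀
    ((summable_dualLatPt_iff hω hg (zero_lt_one.trans_le hq) hA hc₀.ne' hΓo.measurableSet).1 hgΓ)
  have hφg := hφ.integrable_mul hg.locallyIntegrable
  exact ⟨Γ', hΓo', hΓ', hξ₀', (FLSemi_ne_top_iff hω hφg).2 h⟩

end WaveFrontSet

theorem stmt19_general (s q : ℝ) (hs : 1 ≤ s) (hq : 1 ≤ q) (ω : 𝔼 d → ℝ)
    (hω : IsSAdmissible s ω) (f : 𝔼 d → ℂ) (hf : LocallyIntegrable f) (x₀ ξ₀ : 𝔼 d)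
    (hξ₀ : ξ₀ ≠ 0) :
    (x₀, ξ₀) ∉ WF_FL s (ENNReal.ofReal q) ω f ↔
      ∃ (A : Matrix (Fin d) (Fin d) ℝ) (_ : IsUnit A.det) (c : ℝ) (_ : 0 < c)
        (_ : c < 2 * Real.pi) (x₁ : 𝔼 d) (φ : 𝔼 d → ℂ), IsSCutoff s φ ∧ φ x₀ ≠ 0 ∧
          tsupport φ ⊆ interior (lattPara A x₁) ∧
          ∃ Γ : Set (𝔼 d), IsOpen Γ ∧ IsCone Γ ∧ ξ₀ ∈ Γ ∧
            Summable fun k : Fin d → ℤ =>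
              Γ.indicator (fun ξ => (‖FT (fun x => φ x * f x) ξ‖ * ω ξ) ^ q)
                (dualLatPt A c k) := by
  rw [notMem_WF_FL_iff hξ₀]
  constructor
  · rintro ⟨φ, hφ, hφx₀, Γ, hΓo, hΓ, hξ₀Γ, hfin⟩
    obtain ⟨A, x₁, hA, hbox⟩ := exists_subset_interior_lattPara hφ.2.1.isBounded
    refine ⟨A, hA, 1, one_pos, by linarith [Real.pi_gt_three], x₁, fun x => φ x * φ x,
      hφ.mul hφ hs, mul_ne_zero hφx₀ hφx₀, tsupport_mul_subset_left.trans hbox, ?_⟩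
    simp only [mul_assoc]
    exact hφ.exists_isCone_summable_dualLatPt hs hq hω (hφ.integrable_mul hf) hΓo hΓ hξ₀Γ hfin hA
      one_ne_zero
  · rintro ⟨A, hA, c, hc₀, hc, x₁, φ, hφ, hφx₀, hbox, Γ, hΓo, hΓ, hξ₀Γ, hsum⟩
    refine ⟨fun x => φ x * φ x, hφ.mul hφ hs, mul_ne_zero hφx₀ hφx₀, ?_⟩
    simp only [mul_assoc]
    have hφf : Function.support (fun x => φ x * f x) ⊆ interior (lattPara A x₁) :=
      (Function.support_mul_subset_left φ f).trans ((subset_tsupport φ).trans hbox)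
    exact hφ.exists_isCone_FLSemi_ne_top hs hq hω (hφ.integrable_mul hf) hΓo hΓ hξ₀Γ hA hc₀ hc.le
      hbox hφf hsum

theorem stmt19 {d : ℕ} (s q : ℝ) (hs : 1 < s) (hq : 1 ≤ q)
    (ω : EuclideanSpace ℝ (Fin d) → ℝ) (hω : IsSAdmissible s ω)
    (f : EuclideanSpace ℝ (Fin d) → ℂ) (hf : Integrable f) (hfc : HasCompactSupport f)
    (x₀ ξ₀ : EuclideanSpace ℝ (Fin d)) (hξ₀ : ξ₀ ≠ 0) :
    (x₀, ξ₀) ∉ WF_FL s (ENNReal.ofReal q) ω f ↔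
      ∃ (A : Matrix (Fin d) (Fin d) ℝ) (_ : IsUnit A.det) (c : ℝ) (_ : 0 < c)
        (_ : c < 2 * Real.pi) (x₁ : EuclideanSpace ℝ (Fin d))
        (φ : EuclideanSpace ℝ (Fin d) → ℂ), IsSCutoff s φ ∧ φ x₀ ≠ 0 ∧
          tsupport φ ⊆ interior (lattPara A x₁) ∧
          ∃ Γ : Set (EuclideanSpace ℝ (Fin d)), IsOpen Γ ∧ IsCone Γ ∧ ξ₀ ∈ Γ ∧
            Summable fun k : Fin d → ℤ =>
              Γ.indicator (fun ξ => (‖FT (fun x => φ x * f x) ξ‖ * ω ξ) ^ q)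
                (dualLatPt A c k) := by
  exact stmt19_general s q hs.le hq ω hω f hf.locallyIntegrable x₀ ξ₀ hξ₀

end Paper
end
end
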